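/- arXiv:1304.5392 — 4 statements merged into one kernel-verified Lean document; each statement's English description precedes it below -/
import Mathlib

section
/- Fix a real number k ≥ 1. Define, for x ∈ (0, π/2), A(x) = cos(x)·(sin(x) − x·cos(x))²·(x − cos(x)·sin(x)), B(x) = (x − cos(x)·sin(x))²·(sin(x) − x·cos(x)), and C(x) = x·sin²(x)·(−2x²·cos(x) + x·sin(x) + cos(x)·sin²(x)). Then the function x ↦ C(x)/(k·A(x) + B(x)) is strictly increasing on (0, π/2), and for every x ∈ (0, π/2) one has 5/(12(k+2)) < C(x)/(k·A(x) + B(x)) < 1. -/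
open Real Set

lemma wl_nonneg (f f' : ℝ → ℝ) (hf : ∀ x, HasDerivAt f (f' x) x) (h0 : f 0 = 0)
    (hp : ∀ x, 0 ≤ x → 0 ≤ f' x) (x : ℝ) (hx : 0 ≤ x) : 0 ≤ f x := by
  have hm : MonotoneOn f (Ici 0) := by
    apply monotoneOn_of_deriv_nonneg (convex_Ici 0)
    · exact fun y _ => (hf y).continuousAt.continuousWithinAt
    · exact fun y _ => (hf y).differentiableAt.differentiableWithinAt
    · intro y hy
      rw [interior_Ici] at hy
      rw [(hf y).deriv]
      exact hp y (le_of_lt hy)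
  have := hm (self_mem_Ici) hx hx
  rwa [h0] at this

lemma wl_mono (n : ℕ) (a x : ℝ) : HasDerivAt (fun x : ℝ => a * x ^ n) (a * (n * x ^ (n - 1))) x :=
  (hasDerivAt_pow n x).const_mul a

lemma wl_sin3 (x : ℝ) (hx : 0 ≤ x) : 0 ≤ sin x - (x - 1/6 * x ^ 3) := by
  refine wl_nonneg (fun x => sin x - (x - 1/6 * x ^ 3)) _
    (fun x => (hasDerivAt_sin x).sub ((hasDerivAt_id x).sub (wl_mono 3 _ x))) (by simp) ?_ x hx
  intro y hy
  have := one_sub_sq_div_two_le_cos (x := y)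
  norm_num
  linarith

lemma wl_cos4 (x : ℝ) (hx : 0 ≤ x) : 0 ≤ (1 - 1/2 * x ^ 2 + 1/24 * x ^ 4) - cos x := by
  refine wl_nonneg (fun x => (1 - 1/2 * x ^ 2 + 1/24 * x ^ 4) - cos x) _
    (fun x => (((hasDerivAt_const x (1:ℝ)).sub (wl_mono 2 _ x)).add (wl_mono 4 _ x)).sub
      (hasDerivAt_cos x)) (by simp) ?_ x hx
  intro y hy
  have := wl_sin3 y hy
  norm_num
  linarith

lemma wl_sin5 (x : ℝ) (hx : 0 ≤ x) : 0 ≤ (x - 1/6 * x ^ 3 + 1/120 * x ^ 5) - sin x := by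
  refine wl_nonneg (fun x => (x - 1/6 * x ^ 3 + 1/120 * x ^ 5) - sin x) _
    (fun x => (((hasDerivAt_id x).sub (wl_mono 3 _ x)).add (wl_mono 5 _ x)).sub
      (hasDerivAt_sin x)) (by simp) ?_ x hx
  intro y hy
  have := wl_cos4 y hy
  norm_num
  linarith

lemma wl_cos6 (x : ℝ) (hx : 0 ≤ x) :
    0 ≤ cos x - (1 - 1/2 * x ^ 2 + 1/24 * x ^ 4 - 1/720 * x ^ 6) := by
  refine wl_nonneg (fun x => cos x - (1 - 1/2 * x ^ 2 + 1/24 * x ^ 4 - 1/720 * x ^ 6)) _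
    (fun x => (hasDerivAt_cos x).sub ((((hasDerivAt_const x (1:ℝ)).sub (wl_mono 2 _ x)).add
      (wl_mono 4 _ x)).sub (wl_mono 6 _ x))) (by simp) ?_ x hx
  intro y hy
  have := wl_sin5 y hy
  norm_num
  linarith

lemma wl_sin7 (x : ℝ) (hx : 0 ≤ x) :
    0 ≤ sin x - (x - 1/6 * x ^ 3 + 1/120 * x ^ 5 - 1/5040 * x ^ 7) := by
  refine wl_nonneg (fun x => sin x - (x - 1/6 * x ^ 3 + 1/120 * x ^ 5 - 1/5040 * x ^ 7)) _
    (fun x => (hasDerivAt_sin x).sub ((((hasDerivAt_id x).sub (wl_mono 3 _ x)).add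
      (wl_mono 5 _ x)).sub (wl_mono 7 _ x))) (by simp) ?_ x hx
  intro y hy
  have := wl_cos6 y hy
  norm_num
  linarith

lemma wl_cos8 (x : ℝ) (hx : 0 ≤ x) :
    0 ≤ (1 - 1/2 * x ^ 2 + 1/24 * x ^ 4 - 1/720 * x ^ 6 + 1/40320 * x ^ 8) - cos x := by
  refine wl_nonneg
    (fun x => (1 - 1/2 * x ^ 2 + 1/24 * x ^ 4 - 1/720 * x ^ 6 + 1/40320 * x ^ 8) - cos x) _
    (fun x => (((((hasDerivAt_const x (1:ℝ)).sub (wl_mono 2 _ x)).add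
      (wl_mono 4 _ x)).sub (wl_mono 6 _ x)).add (wl_mono 8 _ x)).sub (hasDerivAt_cos x))
    (by simp) ?_ x hx
  intro y hy
  have := wl_sin7 y hy
  norm_num
  linarith

lemma wl_sin9 (x : ℝ) (hx : 0 ≤ x) :
    0 ≤ (x - 1/6 * x ^ 3 + 1/120 * x ^ 5 - 1/5040 * x ^ 7 + 1/362880 * x ^ 9) - sin x := by
  refine wl_nonneg
    (fun x => (x - 1/6 * x ^ 3 + 1/120 * x ^ 5 - 1/5040 * x ^ 7 + 1/362880 * x ^ 9) - sin x) _
    (fun x => (((((hasDerivAt_id x).sub (wl_mono 3 _ x)).add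
      (wl_mono 5 _ x)).sub (wl_mono 7 _ x)).add (wl_mono 9 _ x)).sub (hasDerivAt_sin x))
    (by simp) ?_ x hx
  intro y hy
  have := wl_cos8 y hy
  norm_num
  linarith

lemma wl_derivP (x : ℝ) : HasDerivAt (fun x => sin x - x * cos x) (x * sin x) x := by
  have := (hasDerivAt_sin x).sub ((hasDerivAt_id x).mul (hasDerivAt_cos x))
  exact this.congr_deriv (by simp only [id]; ring)

lemma wl_derivQ (x : ℝ) : HasDerivAt (fun x => x - cos x * sin x) (2 * sin x ^ 2) x := by
  have := (hasDerivAt_id x).sub ((hasDerivAt_cos x).mul (hasDerivAt_sin x))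
  exact this.congr_deriv (by linear_combination -sin_sq_add_cos_sq x)

lemma wl_P3 (x : ℝ) (hx : 0 ≤ x) : 0 ≤ 1/3 * x ^ 3 - (sin x - x * cos x) := by
  refine wl_nonneg (fun x => 1/3 * x ^ 3 - (sin x - x * cos x)) _
    (fun x => (wl_mono 3 _ x).sub (wl_derivP x)) (by simp) ?_ x hx
  intro y hy
  have := mul_le_mul_of_nonneg_left (sin_le hy) hy
  norm_num
  linarith

lemma wl_P7 (x : ℝ) (hx : 0 ≤ x) :
    0 ≤ (1/3 * x ^ 3 - 1/30 * x ^ 5 + 1/840 * x ^ 7) - (sin x - x * cos x) := by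
  refine wl_nonneg
    (fun x => (1/3 * x ^ 3 - 1/30 * x ^ 5 + 1/840 * x ^ 7) - (sin x - x * cos x)) _
    (fun x => (((wl_mono 3 _ x).sub (wl_mono 5 _ x)).add (wl_mono 7 _ x)).sub (wl_derivP x))
    (by simp) ?_ x hx
  intro y hy
  have := mul_nonneg hy (wl_sin5 y hy)
  norm_num
  linarith

lemma wl_P11 (x : ℝ) (hx : 0 ≤ x) :
    0 ≤ (1/3 * x ^ 3 - 1/30 * x ^ 5 + 1/840 * x ^ 7 - 1/45360 * x ^ 9 + 1/3991680 * x ^ 11)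
      - (sin x - x * cos x) := by
  refine wl_nonneg
    (fun x => (1/3 * x ^ 3 - 1/30 * x ^ 5 + 1/840 * x ^ 7 - 1/45360 * x ^ 9
      + 1/3991680 * x ^ 11) - (sin x - x * cos x)) _
    (fun x => (((((wl_mono 3 _ x).sub (wl_mono 5 _ x)).add (wl_mono 7 _ x)).sub
      (wl_mono 9 _ x)).add (wl_mono 11 _ x)).sub (wl_derivP x))
    (by simp) ?_ x hx
  intro y hy
  have := mul_nonneg hy (wl_sin9 y hy)
  norm_num
  linarith

lemma wl_Ppos (x : ℝ) (hx : 0 < x) (h2 : x ≤ π / 2) : 0 < sin x - x * cos x := by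
  rcases h2.lt_or_eq with h | h
  · have h1 := lt_tan hx h
    have hc := cos_pos_of_mem_Ioo ⟨by linarith, h⟩
    rw [tan_eq_sin_div_cos, lt_div_iff₀ hc] at h1
    linarith
  · rw [h]; simp

lemma wl_Qpos (x : ℝ) (hx : 0 < x) : 0 < x - cos x * sin x := by
  have := sin_lt (x := 2 * x) (by linarith)
  rw [sin_two_mul] at this
  linarith

lemma wl_Q3 (x : ℝ) (hx : 0 ≤ x) : x - cos x * sin x ≤ 2/3 * x ^ 3 := by
  have := wl_sin3 (2 * x) (by linarith)
  rw [sin_two_mul] at this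
  linarith

lemma wl_zbound (x : ℝ) (hx : 0 < x) (h2 : x ≤ π / 2) : x ^ 2 < 5/2 := by
  have := pi_lt_d2
  have h : x < 1.575 := by linarith
  nlinarith

lemma wl_R (x : ℝ) (hx : 0 < x) (h2 : x ≤ π / 2) :
    5/12 * ((sin x - x * cos x) * (x - cos x * sin x)) <
      -2 * x ^ 2 * cos x + x * sin x + cos x * sin x ^ 2 := by
  have hP := wl_P3 x hx.le
  have hQ := wl_Q3 x hx.le
  have hz := wl_zbound x hx h2
  have hz0 : 0 < x ^ 2 := by positivity
  have hPQ : (sin x - x * cos x) * (x - cos x * sin x) ≤ (1/3 * x ^ 3) * (2/3 * x ^ 3) :=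
    mul_le_mul (by linarith) hQ (wl_Qpos x hx).le (by positivity)
  have hs := wl_sin7 x hx.le
  have hc := wl_cos4 x hx.le
  have hsx := sin_le hx.le
  obtain ⟨z, hzz⟩ : ∃ z, z = x ^ 2 := ⟨_, rfl⟩
  rw [← hzz] at hz hz0
  obtain ⟨t, ht⟩ : ∃ t, t = 1 - 1/6 * z + 1/120 * z ^ 2 - 1/5040 * z ^ 3 := ⟨_, rfl⟩
  obtain ⟨d, hd⟩ : ∃ d, d = 1 - 1/2 * z + 1/24 * z ^ 2 := ⟨_, rfl⟩
  have ht0 : 0 < t := by rw [ht]; nlinarith [mul_pos hz0 hz0, mul_pos (mul_pos hz0 hz0) (sub_pos.2 hz)]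
  have hd0 : 0 < d := by rw [hd]; nlinarith [sq_nonneg (z - 6)]
  have hs' : x * t ≤ sin x := by
    have : x * t = x - 1/6 * x ^ 3 + 1/120 * x ^ 5 - 1/5040 * x ^ 7 := by rw [ht, hzz]; ring
    linarith
  have hc' : cos x ≤ d := by
    have : d = 1 - 1/2 * x ^ 2 + 1/24 * x ^ 4 := by rw [hd, hzz]; ring
    linarith
  have hss : (x * t) ^ 2 ≤ sin x ^ 2 := pow_le_pow_left₀ (by positivity) hs' 2
  have hsx2 : sin x ^ 2 ≤ x ^ 2 := pow_le_pow_left₀ (le_trans (by positivity) hs') hsx 2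
  have e1 : 0 ≤ (d - cos x) * (2 * x ^ 2 - sin x ^ 2) :=
    mul_nonneg (by linarith) (by nlinarith)
  have e2 : 0 ≤ d * (sin x ^ 2 - (x * t) ^ 2) := mul_nonneg hd0.le (by linarith)
  have e3 : 0 ≤ x * (sin x - x * t) := mul_nonneg hx.le (by linarith)
  have key : 5/54 * z ^ 2 < d * (t ^ 2 - 2) + t := by
    rw [ht, hd]
    have hw : 0 < 5/2 - z := by linarith
    have h1 : 0 < 23/270 - 199/5040 * z + 1081/302400 * z ^ 2 - 41/201600 * z ^ 3 := by
      nlinarith [mul_pos (mul_pos hz0 hz0) hw, sq_nonneg (z - 5/2), mul_pos hz0 hw]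
    have h2 : 0 < z ^ 4 * (373/50803200 - 1/6350400 * z) :=
      mul_pos (by positivity) (by linarith)
    have h3 : 0 < z ^ 6 * (1/609638400) := by positivity
    have := mul_pos (pow_pos hz0 2) (add_pos (add_pos h1 h2) h3)
    linarith
  have key2 := mul_lt_mul_of_pos_left key hz0
  have e4 : z * (d * (t ^ 2 - 2) + t) = d * ((x * t) ^ 2 - 2 * x ^ 2) + x * (x * t) := by
    rw [hzz]; ring
  have e5 : z * (5/54 * z ^ 2) = 5/12 * ((1/3 * x ^ 3) * (2/3 * x ^ 3)) := by
    rw [hzz]; ring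
  nlinarith

lemma wl_main (x : ℝ) (hx : 0 < x) (h2 : x ≤ π / 2) :
    (sin x - x * cos x) ^ 2 * (sin (2 * x) - 2 * x * cos (2 * x)) < (x - cos x * sin x) ^ 3 := by
  have hz := wl_zbound x hx h2
  have hz0 : 0 < x ^ 2 := by positivity
  have hP0 := wl_Ppos x hx h2
  have hP := wl_P7 x hx.le
  have hS := wl_P11 (2 * x) (by linarith)
  have hQ := wl_sin9 (2 * x) (by linarith)
  rw [sin_two_mul] at hQ
  obtain ⟨z, hzz⟩ : ∃ z, z = x ^ 2 := ⟨_, rfl⟩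
  rw [← hzz] at hz hz0
  obtain ⟨p, hp⟩ : ∃ p, p = 1 - 1/10 * z + 1/280 * z ^ 2 := ⟨_, rfl⟩
  obtain ⟨q, hq⟩ : ∃ q, q = 1 - 1/5 * z + 2/105 * z ^ 2 - 1/945 * z ^ 3 := ⟨_, rfl⟩
  obtain ⟨r, hr⟩ : ∃ r, r = 1 - 2/5 * z + 2/35 * z ^ 2 - 4/945 * z ^ 3 + 2/10395 * z ^ 4 :=
    ⟨_, rfl⟩
  have hp' : sin x - x * cos x ≤ 1/3 * x ^ 3 * p := by
    have : 1/3 * x ^ 3 * p = 1/3 * x ^ 3 - 1/30 * x ^ 5 + 1/840 * x ^ 7 := by rw [hp, hzz]; ring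
    linarith
  have hq' : 2/3 * x ^ 3 * q ≤ x - cos x * sin x := by
    have : 2/3 * x ^ 3 * q = 2/3 * x ^ 3 - 2/15 * x ^ 5 + 4/315 * x ^ 7 - 2/2835 * x ^ 9 := by
      rw [hq, hzz]; ring
    nlinarith
  have hr' : sin (2 * x) - 2 * x * cos (2 * x) ≤ 8/3 * x ^ 3 * r := by
    have : 8/3 * x ^ 3 * r = 1/3 * (2 * x) ^ 3 - 1/30 * (2 * x) ^ 5 + 1/840 * (2 * x) ^ 7
      - 1/45360 * (2 * x) ^ 9 + 1/3991680 * (2 * x) ^ 11 := by rw [hr, hzz]; ring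
    linarith
  have hq0 : 0 < q := by
    rw [hq]; nlinarith [mul_pos hz0 hz0, mul_pos (mul_pos hz0 hz0) (sub_pos.2 hz)]
  have hr0 : 0 < r := by
    rw [hr]
    nlinarith [mul_pos hz0 hz0, mul_pos (mul_pos hz0 hz0) (sub_pos.2 hz), sq_nonneg (z - 5/2),
      pow_pos hz0 4]
  have key : p ^ 2 * r < q ^ 3 := by
    have hd : q ^ 3 - p ^ 2 * r = z ^ 2 * ((4/175 - 2041/189000 * z + 18061/7761600 * z ^ 2
        - 5989/19404000 * z ^ 3) + z ^ 4 * (100511/3667356000 - 2993/1833678000 * z)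
        + z ^ 6 * (677/11002068000 - 1/843908625 * z)) := by
      rw [hp, hq, hr]; ring
    have h1 : 0 < 4/175 - 2041/189000 * z + 18061/7761600 * z ^ 2 - 5989/19404000 * z ^ 3 := by
      nlinarith [mul_pos (mul_pos hz0 hz0) (sub_pos.2 hz), sq_nonneg (z - 5/2),
        mul_pos hz0 (sub_pos.2 hz)]
    have h2 : 0 < z ^ 4 * (100511/3667356000 - 2993/1833678000 * z) :=
      mul_pos (by positivity) (by linarith)
    have h3 : 0 < z ^ 6 * (677/11002068000 - 1/843908625 * z) :=
      mul_pos (by positivity) (by linarith)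
    have := mul_pos (pow_pos hz0 2) (add_pos (add_pos h1 h2) h3)
    linarith
  have hx3 : 0 < x ^ 3 := by positivity
  calc (sin x - x * cos x) ^ 2 * (sin (2 * x) - 2 * x * cos (2 * x))
      ≤ (sin x - x * cos x) ^ 2 * (8/3 * x ^ 3 * r) := by gcongr
    _ ≤ (1/3 * x ^ 3 * p) ^ 2 * (8/3 * x ^ 3 * r) := by gcongr
    _ = 8/27 * (x ^ 3) ^ 3 * (p ^ 2 * r) := by ring
    _ < 8/27 * (x ^ 3) ^ 3 * q ^ 3 := by gcongr
    _ = (2/3 * x ^ 3 * q) ^ 3 := by ring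
    _ ≤ (x - cos x * sin x) ^ 3 := by gcongr

lemma wl_f : StrictMonoOn (fun x : ℝ => 2 * x / (x - cos x * sin x) - sin x / (sin x - x * cos x))
    (Ioc 0 (π / 2)) := by
  have hd : ∀ x ∈ Ioc 0 (π / 2), HasDerivAt
      (fun x : ℝ => 2 * x / (x - cos x * sin x) - sin x / (sin x - x * cos x))
      ((2 * (x - cos x * sin x) - 2 * x * (2 * sin x ^ 2)) / (x - cos x * sin x) ^ 2 -
        (cos x * (sin x - x * cos x) - sin x * (x * sin x)) / (sin x - x * cos x) ^ 2) x := by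
    intro x hx
    have h1 : HasDerivAt (fun x : ℝ => 2 * x) 2 x := by
      simpa using (hasDerivAt_id x).const_mul 2
    exact (h1.div (wl_derivQ x) (wl_Qpos x hx.1).ne').sub
      ((hasDerivAt_sin x).div (wl_derivP x) (wl_Ppos x hx.1 hx.2).ne')
  apply strictMonoOn_of_deriv_pos (convex_Ioc _ _)
  · exact fun y hy => (hd y hy).continuousAt.continuousWithinAt
  · intro x hx
    rw [interior_Ioc] at hx
    have hx' := Ioo_subset_Ioc_self hx
    rw [(hd x hx').deriv]
    have hP := wl_Ppos x hx'.1 hx'.2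
    have hQ := wl_Qpos x hx'.1
    have hm := wl_main x hx'.1 hx'.2
    have e1 : cos x * (sin x - x * cos x) - sin x * (x * sin x) = -(x - cos x * sin x) := by
      linear_combination -x * sin_sq_add_cos_sq x
    have e2 : 2 * (x - cos x * sin x) - 2 * x * (2 * sin x ^ 2) =
        -(sin (2 * x) - 2 * x * cos (2 * x)) := by
      rw [sin_two_mul, cos_two_mul]
      linear_combination -4 * x * sin_sq_add_cos_sq x
    rw [e1, e2, neg_div, neg_div, sub_neg_eq_add, neg_add_eq_sub, sub_pos,
      div_lt_div_iff₀ (by positivity) (by positivity)]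
    linarith

lemma wl_f_eq (x : ℝ) (hx : 0 < x) (h2 : x ≤ π / 2) :
    2 * x / (x - cos x * sin x) - sin x / (sin x - x * cos x) =
    (-2 * x ^ 2 * cos x + x * sin x + cos x * sin x ^ 2) /
      ((sin x - x * cos x) * (x - cos x * sin x)) := by
  have hP := (wl_Ppos x hx h2).ne'
  have hQ := (wl_Qpos x hx).ne'
  rw [div_sub_div _ _ hQ hP, mul_comm (x - cos x * sin x) (sin x - x * cos x)]
  congr 1
  ring

lemma wl_h : AntitoneOn (fun x : ℝ => (cos x * (sin x - x * cos x)) / (x * sin x ^ 2))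
    (Ioo 0 (π / 2)) := by
  have hd : ∀ x ∈ Ioo 0 (π / 2), HasDerivAt
      (fun x : ℝ => (cos x * (sin x - x * cos x)) / (x * sin x ^ 2))
      (((-sin x * (sin x - x * cos x) + cos x * (x * sin x)) * (x * sin x ^ 2) -
        (cos x * (sin x - x * cos x)) * (1 * sin x ^ 2 + x * (2 * sin x * cos x))) /
        (x * sin x ^ 2) ^ 2) x := by
    intro x hx
    have hs : 0 < sin x := sin_pos_of_pos_of_lt_pi hx.1 (by linarith [hx.2, pi_pos])
    have hx0 := hx.1
    have h1 : HasDerivAt (fun x : ℝ => sin x ^ 2) (2 * sin x * cos x) x := by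
      exact ((hasDerivAt_sin x).pow 2).congr_deriv (by norm_num)
    exact ((hasDerivAt_cos x).mul (wl_derivP x)).div ((hasDerivAt_id x).mul h1)
      (ne_of_gt (mul_pos hx0 (pow_pos hs 2)))
  apply antitoneOn_of_deriv_nonpos (convex_Ioo _ _)
  · exact fun y hy => (hd y hy).continuousAt.continuousWithinAt
  · rw [interior_Ioo]
    exact fun y hy => (hd y hy).differentiableAt.differentiableWithinAt
  · intro x hx
    rw [interior_Ioo] at hx
    rw [(hd x hx).deriv]
    have hs : 0 < sin x := sin_pos_of_pos_of_lt_pi hx.1 (by linarith [hx.2, pi_pos])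
    have hP := wl_Ppos x hx.1 hx.2.le
    have hQ := wl_Qpos x hx.1
    have hR := wl_R x hx.1 hx.2.le
    have hR0 : 0 < -2 * x ^ 2 * cos x + x * sin x + cos x * sin x ^ 2 :=
      lt_trans (by positivity) hR
    apply div_nonpos_of_nonpos_of_nonneg _ (by positivity)
    have := mul_pos hs hR0
    have e : (-sin x * (sin x - x * cos x) + cos x * (x * sin x)) * (x * sin x ^ 2) -
        (cos x * (sin x - x * cos x)) * (1 * sin x ^ 2 + x * (2 * sin x * cos x)) =
        -(sin x * (-2 * x ^ 2 * cos x + x * sin x + cos x * sin x ^ 2)) := by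
      linear_combination (-x * sin x ^ 2 + 2 * x ^ 2 * sin x * cos x) * sin_sq_add_cos_sq x
    rw [e]
    linarith

lemma wl_ratio (k x : ℝ) (hk : 1 ≤ k) (hx : x ∈ Ioo 0 (π / 2)) :
    (x * sin x ^ 2 * (-2 * x ^ 2 * cos x + x * sin x + cos x * sin x ^ 2)) /
        (k * (cos x * (sin x - x * cos x) ^ 2 * (x - cos x * sin x)) +
          (x - cos x * sin x) ^ 2 * (sin x - x * cos x)) =
    (2 * x / (x - cos x * sin x) - sin x / (sin x - x * cos x)) /
      ((k - 1) * ((cos x * (sin x - x * cos x)) / (x * sin x ^ 2)) + 1) := by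
  have hP := wl_Ppos x hx.1 hx.2.le
  have hQ := wl_Qpos x hx.1
  have hs : 0 < sin x := sin_pos_of_pos_of_lt_pi hx.1 (by linarith [hx.2, pi_pos])
  have hc := cos_pos_of_mem_Ioo ⟨by linarith [hx.1, pi_pos], hx.2⟩
  have hx0 := hx.1
  have hk1 : 0 ≤ k - 1 := by linarith
  have hD : (0:ℝ) < (k - 1) * ((cos x * (sin x - x * cos x)) / (x * sin x ^ 2)) + 1 := by
    positivity
  have e : k * (cos x * (sin x - x * cos x) ^ 2 * (x - cos x * sin x)) +
          (x - cos x * sin x) ^ 2 * (sin x - x * cos x) =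
      (x * sin x ^ 2) * (((sin x - x * cos x) * (x - cos x * sin x)) *
        ((k - 1) * ((cos x * (sin x - x * cos x)) / (x * sin x ^ 2)) + 1)) := by
    have : (x * sin x ^ 2) * ((k - 1) * ((cos x * (sin x - x * cos x)) / (x * sin x ^ 2)) + 1)
        = (k - 1) * (cos x * (sin x - x * cos x)) + x * sin x ^ 2 := by
      field_simp
    linear_combination (-(sin x - x * cos x) * (x - cos x * sin x)) * this -
      ((sin x - x * cos x) * (x - cos x * sin x)) * x * sin_sq_add_cos_sq x
  rw [e, wl_f_eq x hx.1 hx.2.le, mul_div_mul_left _ _ (by positivity), div_div]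

theorem wilker_lemma_ABC (k : ℝ) (hk : 1 ≤ k) :
    StrictMonoOn (fun x : ℝ =>
      (x * sin x ^ 2 * (-2 * x ^ 2 * cos x + x * sin x + cos x * sin x ^ 2)) /
        (k * (cos x * (sin x - x * cos x) ^ 2 * (x - cos x * sin x)) +
          (x - cos x * sin x) ^ 2 * (sin x - x * cos x))) (Ioo 0 (π / 2)) ∧
    ∀ x ∈ Ioo 0 (π / 2),
      5 / (12 * (k + 2)) <
        (x * sin x ^ 2 * (-2 * x ^ 2 * cos x + x * sin x + cos x * sin x ^ 2)) /
          (k * (cos x * (sin x - x * cos x) ^ 2 * (x - cos x * sin x)) +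
            (x - cos x * sin x) ^ 2 * (sin x - x * cos x)) ∧
      (x * sin x ^ 2 * (-2 * x ^ 2 * cos x + x * sin x + cos x * sin x ^ 2)) /
          (k * (cos x * (sin x - x * cos x) ^ 2 * (x - cos x * sin x)) +
            (x - cos x * sin x) ^ 2 * (sin x - x * cos x)) < 1 := by
  have hf1 : ∀ x ∈ Ioo 0 (π / 2),
      5 / 12 < 2 * x / (x - cos x * sin x) - sin x / (sin x - x * cos x) := by
    intro x hx
    have hP := wl_Ppos x hx.1 hx.2.le
    have hQ := wl_Qpos x hx.1
    rw [wl_f_eq x hx.1 hx.2.le, lt_div_iff₀ (by positivity)]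
    exact wl_R x hx.1 hx.2.le
  have hf2 : ∀ x ∈ Ioo 0 (π / 2),
      2 * x / (x - cos x * sin x) - sin x / (sin x - x * cos x) < 1 := by
    intro x hx
    have hpi : (0:ℝ) < π / 2 := by positivity
    have := wl_f (Ioo_subset_Ioc_self hx) (right_mem_Ioc.2 hpi) hx.2
    have e : 2 * (π / 2) / (π / 2 - cos (π / 2) * sin (π / 2)) -
        sin (π / 2) / (sin (π / 2) - (π / 2) * cos (π / 2)) = 1 := by
      rw [cos_pi_div_two, sin_pi_div_two]
      have := pi_ne_zero
      field_simp
      ring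
    simp only [] at this
    linarith
  have hh : ∀ x ∈ Ioo 0 (π / 2),
      0 < (cos x * (sin x - x * cos x)) / (x * sin x ^ 2) ∧
      (cos x * (sin x - x * cos x)) / (x * sin x ^ 2) ≤ 1 := by
    intro x hx
    have hP := wl_Ppos x hx.1 hx.2.le
    have hQ := wl_Qpos x hx.1
    have hs : 0 < sin x := sin_pos_of_pos_of_lt_pi hx.1 (by linarith [hx.2, pi_pos])
    have hc := cos_pos_of_mem_Ioo ⟨by linarith [hx.1, pi_pos], hx.2⟩
    have hx0 := hx.1
    refine ⟨by positivity, ?_⟩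
    rw [div_le_one (by positivity)]
    have : x * sin x ^ 2 - cos x * (sin x - x * cos x) = x - cos x * sin x := by
      linear_combination x * sin_sq_add_cos_sq x
    linarith
  have hk1 : 0 ≤ k - 1 := by linarith
  constructor
  · intro x hx y hy hxy
    simp only []
    rw [wl_ratio k x hk hx, wl_ratio k y hk hy]
    have h1 := wl_f (Ioo_subset_Ioc_self hx) (Ioo_subset_Ioc_self hy) hxy
    have h2 := wl_h hx hy hxy.le
    simp only [] at h1 h2
    have hy1 := (hh y hy).1
    apply div_lt_div₀ h1 _ (by linarith [hf1 y hy]) (by positivity)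
    gcongr
  · intro x hx
    rw [wl_ratio k x hk hx]
    obtain ⟨h0, h1⟩ := hh x hx
    have a1 := hf1 x hx
    have a2 := hf2 x hx
    have b0 := mul_nonneg hk1 h0.le
    have b1 := mul_le_mul_of_nonneg_left h1 hk1
    constructor
    · rw [div_lt_div_iff₀ (by positivity) (by linarith)]
      nlinarith
    · rw [div_lt_one (by linarith)]
      linarith
end

section
/- Define, for x ∈ (0, ∞), E(x) = cosh(x)·(sinh(x) − x·cosh(x))²·(x − cosh(x)·sinh(x)), F(x) = (sinh(x) − x·cosh(x))·(x − cosh(x)·sinh(x))², and G(x) = x·sinh²(x)·(2x²·cosh(x) − x·sinh(x) − cosh(x)·sinh²(x)). Then: (i) for each fixed real k ≥ 1, the function x ↦ G(x)/(k·E(x) + F(x)) is strictly decreasing on (0, ∞); (ii) for each fixed real k < −2, the function x ↦ G(x)/(k·E(x) + F(x)) is strictly increasing on (0, ∞); and in both cases, for every x ∈ (0, ∞), min(0, 12/(5(k+2))) < G(x)/(k·E(x) + F(x)) < max(0, 12/(5(k+2))). -/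
open Real Set

/-- Cross-difference monotonicity for ratios of power series. -/
lemma wl_cross (a b : ℕ → ℝ) (hab : ∀ n m, n ≤ m → a n * b m ≤ a m * b n)
    (x y : ℝ) (hx : 0 < x) (hxy : x < y) (fx fy gx gy : ℝ)
    (hfx : HasSum (fun n => a n * x ^ n) fx) (hfy : HasSum (fun n => a n * y ^ n) fy)
    (hgx : HasSum (fun n => b n * x ^ n) gx) (hgy : HasSum (fun n => b n * y ^ n) gy)
    (N : ℕ)
    (hN : 0 < (∑ i ∈ Finset.range N, a i * y ^ i) * (∑ i ∈ Finset.range N, b i * x ^ i) -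
      (∑ i ∈ Finset.range N, a i * x ^ i) * (∑ i ∈ Finset.range N, b i * y ^ i)) :
    fx * gy < fy * gx := by
  set S : ℕ → ℝ := fun N =>
    (∑ i ∈ Finset.range N, a i * y ^ i) * (∑ i ∈ Finset.range N, b i * x ^ i) -
      (∑ i ∈ Finset.range N, a i * x ^ i) * (∑ i ∈ Finset.range N, b i * y ^ i) with hS
  have hmono : Monotone S := by
    refine monotone_nat_of_le_succ fun n => ?_
    have key : S (n + 1) - S n = ∑ i ∈ Finset.range n,
        (a n * b i - a i * b n) * (y ^ n * x ^ i - x ^ n * y ^ i) := by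
      have e : ∀ i, (a n * b i - a i * b n) * (y ^ n * x ^ i - x ^ n * y ^ i) =
          a n * y ^ n * (b i * x ^ i) - a n * x ^ n * (b i * y ^ i)
          - b n * y ^ n * (a i * x ^ i) + b n * x ^ n * (a i * y ^ i) := fun i => by ring
      simp only [e, Finset.sum_add_distrib, Finset.sum_sub_distrib, ← Finset.mul_sum]
      simp only [hS, Finset.sum_range_succ]
      ring
    have : 0 ≤ S (n + 1) - S n := by
      rw [key]
      refine Finset.sum_nonneg fun i hi => ?_
      have hi' : i ≤ n := (Finset.mem_range.1 hi).le
      refine mul_nonneg (sub_nonneg.2 (hab i n hi')) (sub_nonneg.2 ?_)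
      obtain ⟨d, rfl⟩ := Nat.exists_eq_add_of_le hi'
      have h1 : x ^ d ≤ y ^ d := pow_le_pow_left₀ hx.le hxy.le d
      have h2 : 0 ≤ x ^ i * y ^ i := by have := hx.trans hxy; positivity
      calc x ^ (i + d) * y ^ i = x ^ i * y ^ i * x ^ d := by ring
        _ ≤ x ^ i * y ^ i * y ^ d := mul_le_mul_of_nonneg_left h1 h2
        _ = _ := by ring
    linarith
  have hlim : Filter.Tendsto S Filter.atTop (nhds (fy * gx - fx * gy)) :=
    (hfy.tendsto_sum_nat.mul hgx.tendsto_sum_nat).sub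
      (hfx.tendsto_sum_nat.mul hgy.tendsto_sum_nat)
  have h1 : S N ≤ fy * gx - fx * gy := hmono.ge_of_tendsto hlim N
  have h2 : 0 < S N := hN
  linarith

/-- `4 (2n)!` times the coefficients of `AB`. -/
noncomputable def wlP (n : ℕ) : ℝ := (2 * n / 3 - 1) * 9 ^ n + 1 + 18 * n - 16 * n ^ 2
/-- `4 (2n)!` times the coefficients of `D`. -/
noncomputable def wlQ (n : ℕ) : ℝ := 9 ^ n - 1 + 24 * n - 32 * n ^ 2

lemma wl_nine (m : ℕ) : ((m : ℝ) + 1) ^ 3 ≤ 9 ^ m := by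
  induction m with
  | zero => norm_num
  | succ k ih =>
    have hk : (0 : ℝ) ≤ k := k.cast_nonneg
    have : 0 ≤ (k : ℝ) ^ 3 := by positivity
    have e : (9 : ℝ) ^ (k + 1) = 9 ^ k * 9 := pow_succ _ _
    rw [e]
    push_cast
    nlinarith [sq_nonneg (k : ℝ)]

lemma wlQ_eq (m : ℕ) : wlQ (m + 3) = 729 * 9 ^ m - 32 * m ^ 2 - 168 * m - 217 := by
  simp only [wlQ]; push_cast; ring

lemma wlP_eq (m : ℕ) :
    wlP (m + 3) = 486 * m * 9 ^ m + 729 * 9 ^ m - 16 * m ^ 2 - 78 * m - 89 := by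
  simp only [wlP]; push_cast; ring

lemma wlQ_pos (m : ℕ) : 0 < wlQ (m + 3) := by
  rw [wlQ_eq]
  have h := wl_nine m
  have hk : (0 : ℝ) ≤ m := m.cast_nonneg
  have : 0 ≤ (m : ℝ) ^ 3 := by positivity
  nlinarith [sq_nonneg (m : ℝ)]

lemma wl_step (m : ℕ) :
    wlP (m + 3) * wlQ (m + 1 + 3) < wlP (m + 1 + 3) * wlQ (m + 3) := by
  rw [wlQ_eq, wlQ_eq, wlP_eq, wlP_eq]
  have h := wl_nine m
  have hk : (0 : ℝ) ≤ m := m.cast_nonneg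
  push_cast
  rw [pow_succ]
  generalize (9 : ℝ) ^ m = u at *
  generalize (m : ℝ) = t at *
  obtain ⟨v, hv, rfl⟩ : ∃ v, 0 ≤ v ∧ u = (t + 1) ^ 3 + v := ⟨u - (t + 1) ^ 3, by linarith, by ring⟩
  rw [← sub_pos]
  ring_nf
  positivity

lemma wl_small (n : ℕ) (h : n < 3) : wlP n = 0 ∧ wlQ n = 0 := by
  interval_cases n <;> norm_num [wlP, wlQ]

lemma wl_le (n m : ℕ) (h : n ≤ m) : wlP n * wlQ m ≤ wlP m * wlQ n := by
  by_cases hn : n < 3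
  · simp [wl_small n hn]
  · obtain ⟨i, rfl⟩ : ∃ i, n = i + 3 := ⟨n - 3, by omega⟩
    obtain ⟨j, rfl⟩ : ∃ j, m = j + 3 := ⟨m - 3, by omega⟩
    have hm : Monotone fun k => wlP (k + 3) / wlQ (k + 3) := by
      refine monotone_nat_of_le_succ fun k => ?_
      rw [div_le_div_iff₀ (wlQ_pos _) (wlQ_pos _)]
      exact (wl_step k).le
    have := hm (show i ≤ j by omega)
    exact (div_le_div_iff₀ (wlQ_pos _) (wlQ_pos _)).1 this

lemma wl_five (m : ℕ) : 0 ≤ 4 * wlP (m + 3) - 5 * wlQ (m + 3) := by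
  rw [wlQ_eq, wlP_eq]
  rcases Nat.eq_zero_or_pos m with rfl | hm
  · norm_num
  have h := wl_nine m
  have hk : (1 : ℝ) ≤ m := by exact_mod_cast hm
  have : 0 ≤ (m : ℝ) ^ 3 := by positivity
  nlinarith [sq_nonneg (m : ℝ), mul_le_mul_of_nonneg_right hk (this.trans (by nlinarith : (m : ℝ) ^ 3 ≤ 9 ^ m))]

lemma wl_conv {f g : ℕ → ℝ} {a b : ℝ} (h : HasSum f a) (hf : ∀ n, g n = f n) (hb : b = a) :
    HasSum g b := by
  rw [hb, funext hf]; exact h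

lemma wl_hcosh (c x : ℝ) :
    HasSum (fun n : ℕ => (c ^ 2) ^ n / (2 * n).factorial * (x ^ 2) ^ n) (cosh (c * x)) := by
  convert Real.hasSum_cosh (c * x) using 2 with n
  rw [mul_pow, pow_mul, pow_mul]; ring

lemma wl_hsinh (c x : ℝ) :
    HasSum (fun n : ℕ => 2 * n * (c ^ 2) ^ n / (2 * n).factorial * (x ^ 2) ^ n)
      (c * x * sinh (c * x)) := by
  rw [← hasSum_nat_add_iff' 1]
  refine wl_conv ((Real.hasSum_sinh (c * x)).mul_left (c * x)) (fun n => ?_) ?_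
  · rw [show 2 * (n + 1) = (2 * n + 1) + 1 by ring, Nat.factorial_succ (2 * n + 1)]
    have : ((2 * n + 1).factorial : ℝ) ≠ 0 := by positivity
    push_cast
    field_simp
    ring
  · simp

lemma wl_hcosh2 (x : ℝ) :
    HasSum (fun n : ℕ => 2 * n * (2 * n - 1) / (2 * n).factorial * (x ^ 2) ^ n)
      (x ^ 2 * cosh x) := by
  rw [← hasSum_nat_add_iff' 1]
  refine wl_conv ((Real.hasSum_cosh x).mul_left (x ^ 2)) (fun n => ?_) ?_
  · rw [show 2 * (n + 1) = (2 * n + 1) + 1 by ring, Nat.factorial_succ (2 * n + 1),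
      Nat.factorial_succ (2 * n)]
    have : ((2 * n).factorial : ℝ) ≠ 0 := by positivity
    push_cast
    field_simp
    ring
  · simp

lemma wl_hAB (x : ℝ) :
    HasSum (fun n : ℕ => wlP n / (2 * n).factorial * (x ^ 2) ^ n)
      (4 * ((x * cosh x - sinh x) * (cosh x * sinh x - x))) := by
  have h := (((((wl_hsinh 3 x).mul_left (1 / 3)).add ((wl_hsinh 1 x).mul_left 5)).sub
    ((wl_hcosh2 x).mul_left 4)).sub (wl_hcosh 3 x)).add (wl_hcosh 1 x)
  refine wl_conv h (fun n => ?_) ?_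
  · simp only [wlP]
    rw [show (3 : ℝ) ^ 2 = 9 by norm_num]
    simp only [one_pow]
    ring
  · rw [sinh_three_mul, cosh_three_mul, one_mul]
    have := Real.cosh_sq x
    have e : cosh x ^ 3 = cosh x * (sinh x ^ 2 + 1) := by rw [← this]; ring
    rw [e]
    ring_nf
    rw [this]
    ring

lemma wl_hD (x : ℝ) :
    HasSum (fun n : ℕ => wlQ n / (2 * n).factorial * (x ^ 2) ^ n)
      (4 * (cosh x * sinh x ^ 2 + x * sinh x - 2 * x ^ 2 * cosh x)) := by
  have h := (((wl_hcosh 3 x).sub (wl_hcosh 1 x)).add ((wl_hsinh 1 x).mul_left 4)).sub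
    ((wl_hcosh2 x).mul_left 8)
  refine wl_conv h (fun n => ?_) ?_
  · simp only [wlQ]
    rw [show (3 : ℝ) ^ 2 = 9 by norm_num]
    simp only [one_pow]
    ring
  · rw [cosh_three_mul, one_mul]
    have := Real.cosh_sq x
    have e : cosh x ^ 3 = cosh x * (sinh x ^ 2 + 1) := by rw [← this]; ring
    rw [e]
    ring

lemma wl_D_pos (x : ℝ) (hx : 0 < x) :
    0 < cosh x * sinh x ^ 2 + x * sinh x - 2 * x ^ 2 * cosh x := by
  have hnn : ∀ n, 0 ≤ wlQ n := fun n => by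
    by_cases hn : n < 3
    · rw [(wl_small n hn).2]
    · obtain ⟨i, rfl⟩ : ∃ i, n = i + 3 := ⟨n - 3, by omega⟩
      exact (wlQ_pos i).le
  have h := le_hasSum (wl_hD x) 3 (fun j _ => by have := hnn j; positivity)
  have h3 : 0 < wlQ 3 := wlQ_pos 0
  have : 0 < wlQ 3 / (2 * 3).factorial * (x ^ 2) ^ 3 := by positivity
  linarith

lemma wl_five_lt (x : ℝ) (hx : 0 < x) :
    5 * (cosh x * sinh x ^ 2 + x * sinh x - 2 * x ^ 2 * cosh x) <
      4 * ((x * cosh x - sinh x) * (cosh x * sinh x - x)) := by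
  have hs := ((wl_hAB x).mul_left 4).sub ((wl_hD x).mul_left 5)
  have hnn : ∀ n, 0 ≤ 4 * wlP n - 5 * wlQ n := fun n => by
    by_cases hn : n < 3
    · simp [wl_small n hn]
    · obtain ⟨i, rfl⟩ : ∃ i, n = i + 3 := ⟨n - 3, by omega⟩
      exact wl_five i
  have h := le_hasSum hs 4 (fun j _ => by
    have := hnn j
    have e : 4 * (wlP j / (2 * j).factorial * (x ^ 2) ^ j) -
      5 * (wlQ j / (2 * j).factorial * (x ^ 2) ^ j) =
      (4 * wlP j - 5 * wlQ j) / (2 * j).factorial * (x ^ 2) ^ j := by ring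
    rw [e]
    positivity)
  have e : 4 * (wlP 4 / (2 * 4).factorial * (x ^ 2) ^ 4) -
      5 * (wlQ 4 / (2 * 4).factorial * (x ^ 2) ^ 4) =
      (4 * wlP 4 - 5 * wlQ 4) / (2 * 4).factorial * (x ^ 2) ^ 4 := by ring
  have h4 : 0 < 4 * wlP 4 - 5 * wlQ 4 := by norm_num [wlP, wlQ]
  have : 0 < (4 * wlP 4 - 5 * wlQ 4) / (2 * 4).factorial * (x ^ 2) ^ 4 := by positivity
  linarith

lemma wl_P_lt (x y : ℝ) (hx : 0 < x) (hxy : x < y) :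
    ((x * cosh x - sinh x) * (cosh x * sinh x - x)) *
      (cosh y * sinh y ^ 2 + y * sinh y - 2 * y ^ 2 * cosh y) <
    ((y * cosh y - sinh y) * (cosh y * sinh y - y)) *
      (cosh x * sinh x ^ 2 + x * sinh x - 2 * x ^ 2 * cosh x) := by
  have hx2 : 0 < x ^ 2 := by positivity
  have hxy2 : x ^ 2 < y ^ 2 := by nlinarith
  have h := wl_cross (fun n => wlP n / (2 * n).factorial) (fun n => wlQ n / (2 * n).factorial)
    (fun n m hnm => by
      have := wl_le n m hnm
      simp only [div_mul_div_comm]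
      rw [mul_comm ((2 * m).factorial : ℝ)]
      gcongr)
    (x ^ 2) (y ^ 2) hx2 hxy2 _ _ _ _ (wl_hAB x) (wl_hAB y) (wl_hD x) (wl_hD y) 5 (by
      generalize x ^ 2 = X at *
      generalize y ^ 2 = Y at *
      have s := wl_step 0
      have hY : 0 < Y := hx2.trans hxy2
      have : 0 < X ^ 3 * Y ^ 3 * (Y - X) := by
        have : 0 < Y - X := by linarith
        positivity
      simp only [Finset.sum_range_succ, Finset.sum_range_zero, wlP, wlQ]
      norm_num [Nat.factorial]
      nlinarith)
  linarith

lemma wl_pos_of_deriv (f f' : ℝ → ℝ) (h0 : f 0 = 0) (hd : ∀ x, HasDerivAt f (f' x) x)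
    (hp : ∀ x, 0 < x → 0 < f' x) (x : ℝ) (hx : 0 < x) : 0 < f x := by
  have : StrictMonoOn f (Ici 0) := by
    refine strictMonoOn_of_deriv_pos (convex_Ici 0)
      (fun z _ => (hd z).continuousAt.continuousWithinAt) fun z hz => ?_
    rw [interior_Ici] at hz
    rw [(hd z).deriv]
    exact hp z hz
  have h := this (mem_Ici.2 le_rfl) (mem_Ici.2 hx.le) hx
  rwa [h0] at h

lemma wl_A_pos (x : ℝ) (hx : 0 < x) : 0 < x * cosh x - sinh x :=
  wl_pos_of_deriv (fun x => x * cosh x - sinh x) (fun x => x * sinh x) (by simp)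
    (fun x => by
      exact HasDerivAt.congr_deriv (((hasDerivAt_id' x).mul (hasDerivAt_cosh x)).sub (hasDerivAt_sinh x)) (by ring))
    (fun x hx => mul_pos hx (sinh_pos_iff.2 hx)) x hx

lemma wl_B_pos (x : ℝ) (hx : 0 < x) : 0 < cosh x * sinh x - x := by
  have h1 := self_lt_sinh_iff.2 hx
  have h2 := one_lt_cosh.2 hx.ne'
  nlinarith

lemma wl_V_pos (x : ℝ) (hx : 0 < x) : 0 < x * sinh x - 2 * cosh x + 2 :=
  wl_pos_of_deriv (fun x => x * sinh x - 2 * cosh x + 2) (fun x => x * cosh x - sinh x)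
    (by simp)
    (fun x => by
      exact HasDerivAt.congr_deriv ((((hasDerivAt_id' x).mul (hasDerivAt_sinh x)).sub
        ((hasDerivAt_cosh x).const_mul 2)).add_const 2) (by ring))
    wl_A_pos x hx

lemma wl_W_pos (x : ℝ) (hx : 0 < x) : 0 < x * cosh x + 2 * x - 3 * sinh x :=
  wl_pos_of_deriv (fun x => x * cosh x + 2 * x - 3 * sinh x)
    (fun x => x * sinh x - 2 * cosh x + 2)
    (by simp)
    (fun x => by
      exact HasDerivAt.congr_deriv ((((hasDerivAt_id' x).mul (hasDerivAt_cosh x)).add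
        ((hasDerivAt_id' x).const_mul 2)).sub ((hasDerivAt_sinh x).const_mul 3)) (by ring))
    wl_V_pos x hx

lemma wl_K_pos (x : ℝ) (hx : 0 < x) :
    0 < 2 * cosh x * (x * cosh x - sinh x) - (cosh x * sinh x - x) := by
  have h := wl_W_pos (2 * x) (by linarith)
  rw [cosh_two_mul, sinh_two_mul] at h
  nlinarith [Real.cosh_sq x]

/-- `R` = `2 - 3 B / (x S ^ 2)`. -/
lemma wl_T_anti : StrictAntiOn (fun x : ℝ => (cosh x * sinh x - x) / (x * sinh x ^ 2)) (Ioi 0) := by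
  have hd : ∀ x : ℝ, 0 < x → HasDerivAt (fun x : ℝ => (cosh x * sinh x - x) / (x * sinh x ^ 2))
      (-(cosh x * sinh x ^ 2 + x * sinh x - 2 * x ^ 2 * cosh x) / (x ^ 2 * sinh x ^ 3)) x := by
    intro x hx
    have hs := sinh_pos_iff.2 hx
    refine HasDerivAt.congr_deriv ((((hasDerivAt_cosh x).mul (hasDerivAt_sinh x)).sub (hasDerivAt_id' x)).div
      ((hasDerivAt_id' x).mul ((hasDerivAt_sinh x).pow 2)) (by
        positivity)) ?_
    simp only [Pi.mul_apply, Pi.pow_apply, Pi.sub_apply]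
    have hc := Real.cosh_sq x
    field_simp
    generalize cosh x = c at *
    generalize sinh x = s at *
    norm_num
    linear_combination (-(s ^ 2 * x)) * hc
  refine strictAntiOn_of_deriv_neg (convex_Ioi 0)
      (fun z hz => (hd z hz).continuousAt.continuousWithinAt) fun z hz => ?_
  rw [interior_Ioi] at hz
  rw [(hd z hz).deriv]
  have := wl_D_pos z hz
  have hs := sinh_pos_iff.2 hz
  have hz' : (0 : ℝ) < z := hz
  rw [neg_div]
  exact neg_neg_of_pos (by positivity)

/-- `P`. -/
noncomputable def wlPP (x : ℝ) : ℝ := (x * cosh x - sinh x) * (cosh x * sinh x - x) /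
  (cosh x * sinh x ^ 2 + x * sinh x - 2 * x ^ 2 * cosh x)
/-- `R`. -/
noncomputable def wlR (x : ℝ) : ℝ := 2 - 3 * ((cosh x * sinh x - x) / (x * sinh x ^ 2))

lemma wlPP_mono {x y : ℝ} (hx : 0 < x) (hxy : x < y) : wlPP x < wlPP y := by
  unfold wlPP
  rw [div_lt_div_iff₀ (wl_D_pos x hx) (wl_D_pos y (hx.trans hxy))]
  exact wl_P_lt x y hx hxy

lemma wlPP_gt {x : ℝ} (hx : 0 < x) : 5 / 4 < wlPP x := by
  unfold wlPP
  rw [div_lt_div_iff₀ (by norm_num) (wl_D_pos x hx)]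
  linarith [wl_five_lt x hx]

lemma wlR_mono {x y : ℝ} (hx : 0 < x) (hxy : x < y) : wlR x < wlR y := by
  unfold wlR
  have := wl_T_anti (mem_Ioi.2 hx) (mem_Ioi.2 (hx.trans hxy)) hxy
  simp only at this
  linarith

lemma wlR_pos {x : ℝ} (hx : 0 < x) : 0 < wlR x := by
  have hs := sinh_pos_iff.2 hx
  have e : wlR x = (2 * cosh x * (x * cosh x - sinh x) - (cosh x * sinh x - x)) /
      (x * sinh x ^ 2) := by
    unfold wlR
    have hc := Real.cosh_sq x
    field_simp
    linear_combination (-2 * x) * hc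
  rw [e]
  have := wl_K_pos x hx
  positivity

/-- reciprocal of the quotient. -/
noncomputable def wlM (k x : ℝ) : ℝ := (k + 2) / 3 * wlPP x + (k - 1) / 3 * (wlPP x * wlR x)

lemma wl_main_s1 (k x : ℝ) (hx : 0 < x) :
    (x * sinh x ^ 2 * (2 * x ^ 2 * cosh x - x * sinh x - cosh x * sinh x ^ 2)) /
          (k * (cosh x * (sinh x - x * cosh x) ^ 2 * (x - cosh x * sinh x)) +
            (sinh x - x * cosh x) * (x - cosh x * sinh x) ^ 2) = (wlM k x)⁻¹ := by
  rw [← inv_div]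
  congr 1
  have hs := sinh_pos_iff.2 hx
  have hD := wl_D_pos x hx
  have hD' : 2 * x ^ 2 * cosh x - x * sinh x - cosh x * sinh x ^ 2 =
    -(cosh x * sinh x ^ 2 + x * sinh x - 2 * x ^ 2 * cosh x) := by ring
  rw [hD']
  unfold wlM wlPP wlR
  have hc := Real.cosh_sq x
  generalize hDD : cosh x * sinh x ^ 2 + x * sinh x - 2 * x ^ 2 * cosh x = D at *
  have hx0 := hx.ne'
  have hs0 := hs.ne'
  have hD0 := hD.ne'
  generalize cosh x = c at *
  generalize sinh x = s at *
  have : x * s ^ 2 = c * (x * c - s) + (c * s - x) := by linear_combination (-x) * hc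
  have hA : s - x * c = -(x * c - s) := by ring
  have hB : x - c * s = -(c * s - x) := by ring
  rw [hA, hB]
  have hT : x * s ^ 2 ≠ 0 := by positivity
  generalize x * c - s = A at *
  generalize c * s - x = B at *
  generalize x * s ^ 2 = T at *
  field_simp
  rw [this]
  ring

lemma wlM_lt_pos {k x y : ℝ} (hk : 1 ≤ k) (hx : 0 < x) (hxy : x < y) : wlM k x < wlM k y := by
  have h1 := wlPP_mono hx hxy
  have h2 := wlR_mono hx hxy
  have h3 := wlR_pos hx
  have h4 := wlPP_gt hx
  have h5 : wlPP x * wlR x ≤ wlPP y * wlR y := by nlinarith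
  unfold wlM
  have : (k + 2) / 3 * wlPP x < (k + 2) / 3 * wlPP y := mul_lt_mul_of_pos_left h1 (by linarith)
  have : (k - 1) / 3 * (wlPP x * wlR x) ≤ (k - 1) / 3 * (wlPP y * wlR y) :=
    mul_le_mul_of_nonneg_left h5 (by linarith)
  linarith

lemma wlM_lt_neg {k x y : ℝ} (hk : k < -2) (hx : 0 < x) (hxy : x < y) : wlM k y < wlM k x := by
  have h1 := wlPP_mono hx hxy
  have h2 := wlR_mono hx hxy
  have h3 := wlR_pos hx
  have h4 := wlPP_gt hx
  have h5 : wlPP x * wlR x ≤ wlPP y * wlR y := by nlinarith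
  unfold wlM
  have : (k + 2) / 3 * wlPP y < (k + 2) / 3 * wlPP x := mul_lt_mul_of_neg_left h1 (by linarith)
  have : (k - 1) / 3 * (wlPP y * wlR y) ≤ (k - 1) / 3 * (wlPP x * wlR x) :=
    mul_le_mul_of_nonpos_left h5 (by linarith)
  linarith

lemma wlM_bd_pos {k x : ℝ} (hk : 1 ≤ k) (hx : 0 < x) : 5 * (k + 2) / 12 < wlM k x := by
  have h3 := wlR_pos hx
  have h4 := wlPP_gt hx
  have h5 : 0 < wlPP x * wlR x := mul_pos (by linarith) h3
  unfold wlM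
  have : (k + 2) / 3 * (5 / 4) < (k + 2) / 3 * wlPP x := mul_lt_mul_of_pos_left h4 (by linarith)
  have : 0 ≤ (k - 1) / 3 * (wlPP x * wlR x) := mul_nonneg (by linarith) h5.le
  linarith

lemma wlM_bd_neg {k x : ℝ} (hk : k < -2) (hx : 0 < x) : wlM k x < 5 * (k + 2) / 12 := by
  have h3 := wlR_pos hx
  have h4 := wlPP_gt hx
  have h5 : 0 < wlPP x * wlR x := mul_pos (by linarith) h3
  unfold wlM
  have : (k + 2) / 3 * wlPP x < (k + 2) / 3 * (5 / 4) := mul_lt_mul_of_neg_left h4 (by linarith)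
  have : (k - 1) / 3 * (wlPP x * wlR x) ≤ 0 := mul_nonpos_of_nonpos_of_nonneg (by linarith) h5.le
  linarith

theorem wilker_lemma_EFG :
    (∀ k : ℝ, 1 ≤ k →
      StrictAntiOn (fun x : ℝ =>
        (x * sinh x ^ 2 * (2 * x ^ 2 * cosh x - x * sinh x - cosh x * sinh x ^ 2)) /
          (k * (cosh x * (sinh x - x * cosh x) ^ 2 * (x - cosh x * sinh x)) +
            (sinh x - x * cosh x) * (x - cosh x * sinh x) ^ 2)) (Ioi 0)) ∧
    (∀ k : ℝ, k < -2 →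
      StrictMonoOn (fun x : ℝ =>
        (x * sinh x ^ 2 * (2 * x ^ 2 * cosh x - x * sinh x - cosh x * sinh x ^ 2)) /
          (k * (cosh x * (sinh x - x * cosh x) ^ 2 * (x - cosh x * sinh x)) +
            (sinh x - x * cosh x) * (x - cosh x * sinh x) ^ 2)) (Ioi 0)) ∧
    (∀ k : ℝ, (1 ≤ k ∨ k < -2) → ∀ x ∈ Ioi (0 : ℝ),
      min 0 (12 / (5 * (k + 2))) <
        (x * sinh x ^ 2 * (2 * x ^ 2 * cosh x - x * sinh x - cosh x * sinh x ^ 2)) /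
          (k * (cosh x * (sinh x - x * cosh x) ^ 2 * (x - cosh x * sinh x)) +
            (sinh x - x * cosh x) * (x - cosh x * sinh x) ^ 2) ∧
      (x * sinh x ^ 2 * (2 * x ^ 2 * cosh x - x * sinh x - cosh x * sinh x ^ 2)) /
          (k * (cosh x * (sinh x - x * cosh x) ^ 2 * (x - cosh x * sinh x)) +
            (sinh x - x * cosh x) * (x - cosh x * sinh x) ^ 2) <
        max 0 (12 / (5 * (k + 2)))) := by
  refine ⟨fun k hk x hx y hy hxy => ?_, fun k hk x hx y hy hxy => ?_, fun k hk x hx => ?_⟩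
  · simp only
    rw [wl_main_s1 k x hx, wl_main_s1 k y hy]
    have h1 := wlM_bd_pos hk hx
    exact inv_strictAnti₀ (by linarith) (wlM_lt_pos hk hx hxy)
  · simp only
    rw [wl_main_s1 k x hx, wl_main_s1 k y hy]
    have h1 := wlM_bd_neg hk hx
    have h2 := wlM_bd_neg hk hy
    rw [inv_lt_inv_of_neg (by linarith) (by linarith)]
    exact wlM_lt_neg hk hx hxy
  · rw [wl_main_s1 k x hx]
    have e : 12 / (5 * (k + 2)) = (5 * (k + 2) / 12)⁻¹ := by rw [inv_div]
    rw [e]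
    rcases hk with hk | hk
    · have h1 := wlM_bd_pos hk hx
      have h0 : 0 < 5 * (k + 2) / 12 := by linarith
      exact ⟨(min_le_left _ _).trans_lt (inv_pos.2 (h0.trans h1)),
        (inv_strictAnti₀ h0 h1).trans_le (le_max_right _ _)⟩
    · have h1 := wlM_bd_neg hk hx
      have h0 : 5 * (k + 2) / 12 < 0 := by linarith
      refine ⟨(min_le_right _ _).trans_lt ?_,
        (inv_neg''.2 (h1.trans h0)).trans_le (le_max_left _ _)⟩
      rw [inv_lt_inv_of_neg h0 (h1.trans h0)]
      exact h1
end

section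
/- Fix a real number k ≥ 1. The inequality (2/(k+2))·(sin(x)/x)^(k·p) + (k/(k+2))·(tan(x)/x)^p > 1 holds for every x ∈ (0, π/2) if and only if p > 0 or p ≤ −(ln(k+2) − ln 2)/(k·(ln π − ln 2)). -/
open Real Set

lemma wk_step (f f' : ℝ → ℝ) (hf : ∀ x, HasDerivAt f (f' x) x) (h0 : f 0 = 0)
    (h : ∀ x, 0 ≤ x → 0 ≤ f' x) : ∀ x, 0 ≤ x → 0 ≤ f x := by
  intro x hx
  have hm : MonotoneOn f (Ici 0) := by
    apply monotoneOn_of_deriv_nonneg (convex_Ici 0)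
    · exact fun y _ => (hf y).continuousAt.continuousWithinAt
    · exact fun y _ => (hf y).differentiableAt.differentiableWithinAt
    · intro y hy
      rw [interior_Ici] at hy
      rw [(hf y).deriv]
      exact h y (le_of_lt hy)
  have := hm (mem_Ici.2 le_rfl) (mem_Ici.2 hx) hx
  rwa [h0] at this

lemma wk_sin3 : ∀ x : ℝ, 0 ≤ x → 0 ≤ sin x - (x - x ^ 3 / 6) := by
  apply wk_step _ (fun x => cos x - (1 - x ^ 2 / 2))
  · intro x
    refine ((hasDerivAt_sin x).sub ((hasDerivAt_id x).sub (((hasDerivAt_id x).pow 3).div_const 6))).congr_deriv ?_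
    simp; ring
  · simp
  · intro x _
    linarith [one_sub_sq_div_two_le_cos (x := x)]

lemma wk_cos4 : ∀ x : ℝ, 0 ≤ x → 0 ≤ (1 - x ^ 2 / 2 + x ^ 4 / 24) - cos x := by
  apply wk_step _ (fun x => sin x - (x - x ^ 3 / 6))
  · intro x
    refine ((((hasDerivAt_const x (1:ℝ)).sub (((hasDerivAt_id x).pow 2).div_const 2)).add
      (((hasDerivAt_id x).pow 4).div_const 24)).sub (hasDerivAt_cos x)).congr_deriv ?_
    simp; ring
  · simp
  · exact wk_sin3

lemma wk_sin5 : ∀ x : ℝ, 0 ≤ x → 0 ≤ (x - x ^ 3 / 6 + x ^ 5 / 120) - sin x := by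
  apply wk_step _ (fun x => (1 - x ^ 2 / 2 + x ^ 4 / 24) - cos x)
  · intro x
    refine ((((hasDerivAt_id x).sub (((hasDerivAt_id x).pow 3).div_const 6)).add
      (((hasDerivAt_id x).pow 5).div_const 120)).sub (hasDerivAt_sin x)).congr_deriv ?_
    simp; ring
  · simp
  · exact wk_cos4

lemma wk_cos6 : ∀ x : ℝ, 0 ≤ x → 0 ≤ cos x - (1 - x ^ 2 / 2 + x ^ 4 / 24 - x ^ 6 / 720) := by
  apply wk_step _ (fun x => (x - x ^ 3 / 6 + x ^ 5 / 120) - sin x)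
  · intro x
    refine ((hasDerivAt_cos x).sub ((((hasDerivAt_const x (1:ℝ)).sub (((hasDerivAt_id x).pow 2).div_const 2)).add
      (((hasDerivAt_id x).pow 4).div_const 24)).sub (((hasDerivAt_id x).pow 6).div_const 720))).congr_deriv ?_
    simp; ring
  · simp
  · exact wk_sin5

lemma wk_sin7 : ∀ x : ℝ, 0 ≤ x → 0 ≤ sin x - (x - x ^ 3 / 6 + x ^ 5 / 120 - x ^ 7 / 5040) := by
  apply wk_step _ (fun x => cos x - (1 - x ^ 2 / 2 + x ^ 4 / 24 - x ^ 6 / 720))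
  · intro x
    refine ((hasDerivAt_sin x).sub ((((hasDerivAt_id x).sub (((hasDerivAt_id x).pow 3).div_const 6)).add
      (((hasDerivAt_id x).pow 5).div_const 120)).sub (((hasDerivAt_id x).pow 7).div_const 5040))).congr_deriv ?_
    simp; ring
  · simp
  · exact wk_cos6

lemma wk_cos8 : ∀ x : ℝ, 0 ≤ x →
    0 ≤ (1 - x ^ 2 / 2 + x ^ 4 / 24 - x ^ 6 / 720 + x ^ 8 / 40320) - cos x := by
  apply wk_step _ (fun x => sin x - (x - x ^ 3 / 6 + x ^ 5 / 120 - x ^ 7 / 5040))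
  · intro x
    refine (((((hasDerivAt_const x (1:ℝ)).sub (((hasDerivAt_id x).pow 2).div_const 2)).add
      (((hasDerivAt_id x).pow 4).div_const 24)).sub (((hasDerivAt_id x).pow 6).div_const 720)).add
      (((hasDerivAt_id x).pow 8).div_const 40320) |>.sub (hasDerivAt_cos x)).congr_deriv ?_
    simp; ring
  · simp
  · exact wk_sin7

/-- the inequality near `0`. -/
lemma wk_core1 (x : ℝ) (hx0 : 0 < x) (hx1 : x ≤ 11 / 10) :
    (x - sin x * cos x) * (x - 267 / 100 * (x - sin x)) < 2 * x * cos x * (sin x - x * cos x) := by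
  have hs1 := wk_sin7 x hx0.le
  have hs2 := wk_sin5 x hx0.le
  have hc1 := wk_cos6 x hx0.le
  have hc2 := wk_cos8 x hx0.le
  have hu1 : x ^ 2 ≤ 121 / 100 := by nlinarith
  obtain ⟨u, hu⟩ : ∃ u, u = x ^ 2 := ⟨_, rfl⟩
  have hu0 : 0 < u := by rw [hu]; positivity
  rw [← hu] at hu1
  have hclp : 0 < 1 - x ^ 2 / 2 + x ^ 4 / 24 - x ^ 6 / 720 := by
    have : 1 - x ^ 2 / 2 + x ^ 4 / 24 - x ^ 6 / 720 = 1 - u / 2 + u ^ 2 / 24 - u ^ 3 / 720 := by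
      rw [hu]; ring
    rw [this]
    have h3 : u ^ 2 * (121 / 100 - u) ≥ 0 := mul_nonneg (by positivity) (by linarith)
    nlinarith [sq_nonneg u]
  have hslp : 0 < x - x ^ 3 / 6 + x ^ 5 / 120 - x ^ 7 / 5040 := by
    have : x - x ^ 3 / 6 + x ^ 5 / 120 - x ^ 7 / 5040
        = x * (1 - u / 6 + u ^ 2 / 120 - u ^ 3 / 5040) := by
      rw [hu]; ring
    rw [this]
    apply mul_pos hx0
    have h3 : u ^ 2 * (121 / 100 - u) ≥ 0 := mul_nonneg (by positivity) (by linarith)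
    nlinarith [sq_nonneg u]
  set sl := x - x ^ 3 / 6 + x ^ 5 / 120 - x ^ 7 / 5040 with hsl
  set cl := 1 - x ^ 2 / 2 + x ^ 4 / 24 - x ^ 6 / 720 with hcl
  set su := x - x ^ 3 / 6 + x ^ 5 / 120 with hsu
  set cu := cl + x ^ 8 / 40320 with hcu
  have hsp : 0 < sin x := by linarith
  have hcp : 0 < cos x := by linarith
  have e1 : sl * cl ≤ sin x * cos x := by
    apply mul_le_mul <;> linarith
  have e2 : sl * (sl * cl) ≤ sin x * (sin x * cos x) := by
    apply mul_le_mul _ e1 _ hsp.le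
    · linarith
    · positivity
  have e3 : cos x * cos x ≤ cu * cu := by
    apply mul_le_mul <;> linarith
  have e1x := mul_le_mul_of_nonneg_left e1 hx0.le
  have e3x := mul_le_mul_of_nonneg_left e3 hu0.le
  have e4x : x * sin x ≤ x * su := mul_le_mul_of_nonneg_left (by linarith) hx0.le
  have key : 0 < 33 / 100 * (x * (sl * cl)) - 2 * (u * (cu * cu)) + 167 / 100 * u
      - 267 / 100 * (x * su) + 267 / 100 * (sl * (sl * cl)) := by
    have hP : 33 / 100 * (x * (sl * cl)) - 2 * (u * (cu * cu)) + 167 / 100 * u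
      - 267 / 100 * (x * su) + 267 / 100 * (sl * (sl * cl)) = u ^ 3 * ((3/100) * u ^ 0 + (-1721/72000) * u ^ 1 + (11731/2520000) * u ^ 2 + (-1747/4032000) * u ^ 3 + (119261/5080320000) * u ^ 4 + (-13301/16934400000) * u ^ 5 + (29/1881600000) * u ^ 6 + (-89/609638400000) * u ^ 7) := by
      rw [hcu, hsl, hcl, hsu, hu]; ring
    rw [hP]
    apply mul_pos (by positivity)
    have h3 : u ^ 2 * (121 / 100 - u) ≥ 0 := mul_nonneg (by positivity) (by linarith)
    have h5 : u ^ 4 * (121 / 100 - u) ≥ 0 := mul_nonneg (by positivity) (by linarith)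
    have h7 : u ^ 6 * (121 / 100 - u) ≥ 0 := mul_nonneg (by positivity) (by linarith)
    have h4 : 0 < u ^ 4 := by positivity
    have h6 : 0 < u ^ 6 := by positivity
    have hq : 0 ≤ (u - 121 / 100) ^ 2 := sq_nonneg _
    ring_nf at h3 h5 h7 hq ⊢
    linarith
  rw [hu] at key e3x
  linarith

/-- the inequality near `π/2`. -/
lemma wk_core2 (x y : ℝ) (hy0 : 0 < y) (hy1 : y ≤ 1 / 2) (hxy : x = π / 2 - y) :
    (x - sin x * cos x) * (9 / 5 * (π / 2 * sin x - x)) < 2 * x * cos x * (sin x - x * cos x) := by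
  have hsx : sin x = cos y := by rw [hxy, sin_pi_div_two_sub]
  have hcx : cos x = sin y := by rw [hxy, cos_pi_div_two_sub]
  rw [hsx, hcx]
  have hs1 := wk_sin3 y hy0.le
  have hs2 := wk_sin5 y hy0.le
  have hc1 := one_sub_sq_div_two_le_cos (x := y)
  have hc2 := wk_cos4 y hy0.le
  have hpi1 := pi_gt_d4
  have hpi2 := pi_lt_d4
  have hu1 : y ^ 2 ≤ 1 / 4 := by nlinarith
  set sl := y - y ^ 3 / 6 with hsl
  set cl := 1 - y ^ 2 / 2 with hcl
  set su := y - y ^ 3 / 6 + y ^ 5 / 120 with hsu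
  set cu := 1 - y ^ 2 / 2 + y ^ 4 / 24 with hcu
  have hslp : 0 < sl := by rw [hsl]; nlinarith
  have hclp : 0 < cl := by rw [hcl]; nlinarith
  have hxl : 15707 / 10000 - y ≤ x := by linarith
  have hxu : x ≤ 15708 / 10000 - y := by linarith
  have hx0 : 0 < x := by linarith
  have hsp : 0 < sin y := by linarith
  have e1 : sl * cl ≤ sin y * cos y := by
    apply mul_le_mul <;> linarith
  have e1x : (15707 / 10000 - y) * (sl * cl) ≤ x * (sin y * cos y) := by
    apply mul_le_mul hxl e1 _ hx0.le
    positivity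
  have e2 : x * sin y ≤ (15708 / 10000 - y) * su := by
    apply mul_le_mul hxu _ hsp.le <;> linarith
  have e3 : (x * sin y) * (x * sin y) ≤ ((15708 / 10000 - y) * su) * ((15708 / 10000 - y) * su) := by
    apply mul_le_mul e2 e2 (by positivity)
    exact le_trans (by positivity) e2
  have e4 : π / 2 * cos y - x ≤ y - 15707 / 10000 * (1 - cu) := by
    have : (π / 2 - 15707 / 10000) * (1 - cos y) ≥ 0 :=
      mul_nonneg (by linarith) (by linarith [cos_le_one y])
    have : 15707 / 10000 * (1 - cu) ≤ 15707 / 10000 * (1 - cos y) := by linarith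
    nlinarith
  have hw : 0 ≤ y - 15707 / 10000 * (1 - cu) := by
    rw [hcu]; nlinarith [pow_pos hy0 4]
  have hm : 0 ≤ x - cos y * sin y := by
    have : cos y * sin y ≤ 1 * (1/2) := by
      apply mul_le_mul (cos_le_one y) _ hsp.le (by norm_num)
      linarith [sin_le hy0.le]
    linarith
  have e5 : (x - cos y * sin y) * (π / 2 * cos y - x)
      ≤ (15708 / 10000 - y - sl * cl) * (y - 15707 / 10000 * (1 - cu)) := by
    apply le_trans (mul_le_mul_of_nonneg_left e4 hm)
    apply mul_le_mul_of_nonneg_right _ hw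
    linarith
  have key : 0 < 2 * ((15707 / 10000 - y) * (sl * cl))
      - 2 * (((15708 / 10000 - y) * su) * ((15708 / 10000 - y) * su))
      - 9 / 5 * ((15708 / 10000 - y - sl * cl) * (y - 15707 / 10000 * (1 - cu))) := by
    have hP : 2 * ((15707 / 10000 - y) * (sl * cl))
      - 2 * (((15708 / 10000 - y) * su) * ((15708 / 10000 - y) * su))
      - 9 / 5 * ((15708 / 10000 - y - sl * cl) * (y - 15707 / 10000 * (1 - cu))) = y * ((7849/25000) * y ^ 0 + (-278573819/250000000) * y ^ 1 + (204251/150000) * y ^ 2 + (-1220307221/3000000000) * y ^ 3 + (-78551/120000) * y ^ 4 + (841161/1953125) * y ^ 5 + (99499/1200000) * y ^ 6 + (-84578671/1125000000) * y ^ 7 + (-7331/960000) * y ^ 8 + (234578671/45000000000) * y ^ 9 + (1309/3000000) * y ^ 10 + (-1/7200) * y ^ 11) := by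
      rw [hsl, hcl, hsu, hcu]; ring
    rw [hP]
    apply mul_pos hy0
    have h0 : 0 ≤ 1 / 2 - y := by linarith
    have h2 : 0 ≤ y ^ 3 * (1 / 2 - y) := by positivity
    have h5 : 0 ≤ y ^ 4 * (1 / 2 - y) := by positivity
    have h6 : 0 ≤ y ^ 6 * (1 / 2 - y) := by positivity
    have h7 : 0 ≤ y ^ 7 * (1 / 2 - y) := by positivity
    have h8 : 0 ≤ y ^ 9 * (1 / 2 - y) := by positivity
    have h9 : 0 ≤ y ^ 10 * (1 / 2 - y) := by positivity
    have g2 : 0 ≤ y ^ 5 := by positivity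
    have g3 : 0 ≤ y ^ 6 := by positivity
    have g4 : 0 ≤ y ^ 9 := by positivity
    have g5 : 0 ≤ y ^ 10 := by positivity
    have g6 : 0 ≤ y ^ 2 * (1 / 2 - y) := by positivity
    have g7 : 0 ≤ y * (1 / 2 - y) := by positivity
    have hq : 0 ≤ (y - 1 / 2) ^ 2 := sq_nonneg _
    ring_nf at h2 h5 h6 h7 h8 h9 g6 g7 hq ⊢
    linarith
  linarith

/-- `2/π < sin x / x < 1`. -/
lemma wk_z (x : ℝ) (hx : x ∈ Ioo (0 : ℝ) (π / 2)) :
    2 / π < sin x / x ∧ sin x / x < 1 := by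
  obtain ⟨h0, h1⟩ := hx
  constructor
  · rw [lt_div_iff₀ h0]
    exact mul_lt_sin h0 h1
  · rw [div_lt_one h0]
    exact sin_lt h0

lemma wk_logpi : 0 < log (π / 2) := log_pos (by linarith [pi_gt_three])

lemma wk_s1_lo : 89 / 100 ≤ log (3 / 2) / log (π / 2) := by
  rw [le_div_iff₀ wk_logpi]
  have h : (π / 2) ^ 89 ≤ (3 / 2 : ℝ) ^ 100 := by
    calc (π / 2) ^ 89 ≤ (1.5708 : ℝ) ^ 89 := by
          have := pi_lt_d4
          gcongr
          linarith
      _ ≤ _ := by norm_num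
  have := log_le_log (by positivity) h
  rw [log_pow, log_pow] at this
  push_cast at this
  linarith

lemma wk_s1_hi : log (3 / 2) / log (π / 2) ≤ 9 / 10 := by
  rw [div_le_iff₀ wk_logpi]
  have h : (3 / 2 : ℝ) ^ 10 ≤ (π / 2) ^ 9 := by
    calc (3 / 2 : ℝ) ^ 10 ≤ (1.5707 : ℝ) ^ 9 := by norm_num
      _ ≤ _ := by
          have := pi_gt_d4
          gcongr
          linarith
  have := log_le_log (by positivity) h
  rw [log_pow, log_pow] at this
  push_cast at this
  linarith

lemma wk_pi_rpow (a : ℝ) (ha : 0 < a) : (π / 2) ^ (log a / log (π / 2)) = a := by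
  rw [rpow_def_of_pos (by positivity), mul_div_cancel₀ _ wk_logpi.ne', exp_log ha]

lemma wk_sc (x : ℝ) (hx : x ∈ Ioo (0 : ℝ) (π / 2)) : 0 < x - sin x * cos x := by
  have h1 := sin_lt hx.1
  have h2 := cos_le_one x
  have h3 : 0 < sin x := sin_pos_of_pos_of_lt_pi hx.1 (by linarith [hx.2, pi_pos])
  nlinarith

lemma wk_key (x : ℝ) (hx : x ∈ Ioo (0 : ℝ) (π / 2)) :
    (3 * (sin x / x) ^ (log (3 / 2) / log (π / 2)) - 2) * (x - sin x * cos x)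
      < 2 * cos x * (sin x - x * cos x) := by
  have hlo := wk_s1_lo
  have hhi := wk_s1_hi
  have hpr := wk_pi_rpow (3 / 2) (by norm_num)
  set s := log (3 / 2) / log (π / 2)
  obtain ⟨hz1, hz2⟩ := wk_z x hx
  have hD := wk_sc x hx
  have hx0 := hx.1
  have hz0 : 0 < sin x / x := lt_trans (by positivity) hz1
  have hxz : sin x = x * (sin x / x) := by field_simp
  set z := sin x / x
  rcases le_or_gt x (11 / 10) with h | h
  · have hc := wk_core1 x hx0 h
    have hb := rpow_one_add_le_one_add_mul_self (s := z - 1) (p := s) (by linarith) (by linarith)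
      (by linarith)
    rw [add_sub_cancel] at hb
    have h1 : 3 * z ^ s - 2 ≤ 1 - 267 / 100 * (1 - z) := by nlinarith
    have h2 := mul_le_mul_of_nonneg_right h1 hD.le
    refine lt_of_le_of_lt h2 ?_
    have h3 : x * ((1 - 267 / 100 * (1 - z)) * (x - sin x * cos x))
        < x * (2 * cos x * (sin x - x * cos x)) := by
      calc _ = (x - sin x * cos x) * (x - 267 / 100 * (x - x * z)) := by ring
        _ < _ := by rw [← hxz]; linarith
    exact lt_of_mul_lt_mul_left h3 hx0.le
  · have hc := wk_core2 x (π / 2 - x) (by linarith [hx.2]) (by linarith [pi_lt_d4]) (by ring)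
    have hw : 1 ≤ π / 2 * z := by
      rw [div_lt_iff₀ pi_pos] at hz1; linarith
    have hb := rpow_one_add_le_one_add_mul_self (s := π / 2 * z - 1) (p := s) (by linarith)
      (by linarith) (by linarith)
    rw [add_sub_cancel, mul_rpow (by positivity) hz0.le, hpr] at hb
    have h1 : 3 * z ^ s - 2 ≤ 9 / 5 * (π / 2 * z - 1) := by nlinarith
    have h2 := mul_le_mul_of_nonneg_right h1 hD.le
    refine lt_of_le_of_lt h2 ?_
    have h3 : x * ((9 / 5 * (π / 2 * z - 1)) * (x - sin x * cos x))
        < x * (2 * cos x * (sin x - x * cos x)) := by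
      calc _ = (x - sin x * cos x) * (9 / 5 * (π / 2 * (x * z) - x)) := by ring
        _ < _ := by rw [← hxz]; linarith
    exact lt_of_mul_lt_mul_left h3 hx0.le

lemma wk_keyk (k : ℝ) (hk : 1 ≤ k) (x : ℝ) (hx : x ∈ Ioo (0 : ℝ) (π / 2)) :
    ((k + 2) * (sin x / x) ^ (log ((k + 2) / 2) / log (π / 2)) - 2) * (x - sin x * cos x)
      < k * (2 * cos x * (sin x - x * cos x)) := by
  have hkey := wk_key x hx
  have hL := wk_logpi
  have hpr1 := wk_pi_rpow (3 / 2) (by norm_num)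
  have hprk := wk_pi_rpow ((k + 2) / 2) (by linarith)
  have hs1 : 0 < log (3 / 2) / log (π / 2) := lt_of_lt_of_le (by norm_num) wk_s1_lo
  have hss : log (3 / 2) / log (π / 2) ≤ log ((k + 2) / 2) / log (π / 2) := by
    apply div_le_div_of_nonneg_right _ hL.le
    apply log_le_log (by norm_num); linarith
  set s1 := log (3 / 2) / log (π / 2)
  set s := log ((k + 2) / 2) / log (π / 2)
  obtain ⟨hz1, hz2⟩ := wk_z x hx
  have hD := wk_sc x hx
  have hz0 : 0 < sin x / x := lt_trans (by positivity) hz1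
  set z := sin x / x
  have hlam : 1 ≤ s / s1 := by rwa [one_le_div hs1]
  have hsl : s1 * (s / s1) = s := by field_simp
  have hw : 1 ≤ π / 2 * z := by
    rw [div_lt_iff₀ pi_pos] at hz1; linarith
  have hX1 : 1 ≤ 3 / 2 * z ^ s1 := by
    have := one_le_rpow hw hs1.le
    rwa [mul_rpow (by positivity) hz0.le, hpr1] at this
  have hzs1 : z ^ s1 ≤ 1 := rpow_le_one hz0.le hz2.le hs1.le
  have hXl : (3 / 2 * z ^ s1) ^ (s / s1) = (k + 2) / 2 * z ^ s := by
    rw [← hpr1, ← mul_rpow (by positivity) hz0.le, ← rpow_mul (by positivity), hsl,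
      mul_rpow (by positivity) hz0.le, hprk]
  have hYl : (3 / 2 : ℝ) ^ (s / s1) = (k + 2) / 2 := by
    rw [← hpr1, ← rpow_mul (by positivity), hsl, hprk]
  have hconv := (convexOn_rpow hlam).2 (show (1 : ℝ) ∈ Ici 0 by simp)
    (show (3 / 2 : ℝ) ∈ Ici 0 by simp; norm_num)
    (show 0 ≤ 1 - (3 * z ^ s1 - 2) by linarith) (show 0 ≤ 3 * z ^ s1 - 2 by linarith) (by ring)
  simp only [smul_eq_mul, one_rpow, hYl] at hconv
  rw [show (1 - (3 * z ^ s1 - 2)) * 1 + (3 * z ^ s1 - 2) * (3 / 2) = 3 / 2 * z ^ s1 by ring,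
    hXl] at hconv
  have h1 : (k + 2) * z ^ s - 2 ≤ k * (3 * z ^ s1 - 2) := by linarith
  have h2 := mul_le_mul_of_nonneg_right h1 hD.le
  have h3 := mul_lt_mul_of_pos_left hkey (show 0 < k by linarith)
  linarith

lemma wk_tz (k : ℝ) (hk : 1 ≤ k) (z : ℝ) (hz1 : 2 / π < z) :
    2 / (k + 2) * z ^ (-(log ((k + 2) / 2) / log (π / 2))) < 1 := by
  have hL := wk_logpi
  have hprk := wk_pi_rpow ((k + 2) / 2) (by linarith)
  have hs : 0 < log ((k + 2) / 2) / log (π / 2) := div_pos (log_pos (by linarith)) hL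
  set s := log ((k + 2) / 2) / log (π / 2)
  have hz0 : 0 < z := lt_trans (by positivity) hz1
  have hw : 1 < π / 2 * z := by
    rw [div_lt_iff₀ pi_pos] at hz1; linarith
  have h := one_lt_rpow hw hs
  rw [mul_rpow (by positivity) hz0.le, hprk] at h
  rw [rpow_neg hz0.le]
  have : 0 < z ^ s := by positivity
  have hk2 : 0 < k + 2 := by linarith
  field_simp
  linarith

/-- the auxiliary function. -/
noncomputable def wkD (k s x : ℝ) : ℝ :=
  -log (1 - 2 / (k + 2) * (sinc x) ^ (-s)) + s / k * (log (cos x) - log (sinc x))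

lemma wk_D_deriv (k s x : ℝ) (hk : 1 ≤ k) (hx : x ∈ Ioo (0 : ℝ) (π / 2))
    (h1 : 2 / (k + 2) * (sin x / x) ^ (-s) < 1) (hs : 0 < s)
    (h2 : ((k + 2) * (sin x / x) ^ s - 2) * (x - sin x * cos x)
      < k * (2 * cos x * (sin x - x * cos x))) :
    ∃ d, HasDerivAt (wkD k s) d x ∧ 0 < d := by
  have hx0 := hx.1
  have hsp : 0 < sin x := sin_pos_of_pos_of_lt_pi hx.1 (by linarith [hx.2, pi_pos])
  have hcp : 0 < cos x := cos_pos_of_mem_Ioo ⟨by linarith [hx.1, pi_pos], hx.2⟩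
  have hz0 : 0 < sin x / x := by positivity
  have hk0 : 0 < k := by linarith
  have hk2 : 0 < k + 2 := by linarith
  have hz : HasDerivAt sinc ((cos x * x - sin x * 1) / x ^ 2) x := by
    have h := (hasDerivAt_sin x).div (hasDerivAt_id x) hx0.ne'
    refine h.congr_of_eventuallyEq ?_
    filter_upwards [eventually_ne_nhds hx0.ne'] with y hy
    simp [sinc_of_ne_zero hy]
  have hsx : sinc x = sin x / x := sinc_of_ne_zero hx0.ne'
  have hP := (hz.rpow_const (p := -s) (Or.inl (by rw [hsx]; exact hz0.ne')))
  have hl1 := ((hP.const_mul (2 / (k + 2))).const_sub 1).log (by rw [hsx]; linarith)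
  have hl2 := (hasDerivAt_cos x).log hcp.ne'
  have hl3 := hz.log (by rw [hsx]; exact hz0.ne')
  refine ⟨_, hl1.neg.add ((hl2.sub hl3).const_mul (s / k)), ?_⟩
  rw [hsx]
  rw [rpow_sub_one hz0.ne', rpow_neg hz0.le]
  rw [rpow_neg hz0.le] at h1
  have hQ0 : 0 < (sin x / x) ^ s := by positivity
  generalize (sin x / x) ^ s = Q at *
  have hQ : 0 < (k + 2) * Q - 2 := by
    rw [← div_eq_mul_inv, div_div, div_lt_one (by positivity)] at h1
    linarith
  have hQ' : 0 < 1 - 2 / (k + 2) * Q⁻¹ := by linarith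
  have e : -(-(2 / (k + 2) * ((cos x * x - sin x * 1) / x ^ 2 * -s * (Q⁻¹ / (sin x / x)))) /
          (1 - 2 / (k + 2) * Q⁻¹)) +
      s / k * (-sin x / cos x - (cos x * x - sin x * 1) / x ^ 2 / (sin x / x))
      = s / (k * x * sin x * cos x * ((k + 2) * Q - 2)) *
        (k * (2 * cos x * (sin x - x * cos x)) - ((k + 2) * Q - 2) * (x - sin x * cos x)) := by
    have e1 : 1 - 2 / (k + 2) * Q⁻¹ = ((k + 2) * Q - 2) / ((k + 2) * Q) := by
      field_simp
    have e2 : x - sin x * cos x = x * (sin x ^ 2 + cos x ^ 2) - sin x * cos x := by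
      rw [sin_sq_add_cos_sq]; ring
    rw [e1, e2]
    generalize hW : (k + 2) * Q - 2 = W at *
    field_simp
    ring
  rw [e]
  apply mul_pos
  · positivity
  · linarith

lemma wk_q0 (k : ℝ) (hk : 1 ≤ k) (x : ℝ) (hx : x ∈ Ioo (0 : ℝ) (π / 2)) (s : ℝ)
    (hs : s = log ((k + 2) / 2) / log (π / 2)) :
    1 < 2 / (k + 2) * (sin x / x) ^ (-s) + k / (k + 2) * (tan x / x) ^ (-(s / k)) := by
  have hL := wk_logpi
  have hs0 : 0 < s := by rw [hs]; exact div_pos (log_pos (by linarith)) hL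
  have hk0 : 0 < k := by linarith
  have hk2 : 0 < k + 2 := by linarith
  have hsinc : ∀ y ∈ Ico (0 : ℝ) (π / 2), 2 / π < sinc y := by
    intro y hy
    rcases eq_or_lt_of_le hy.1 with h | h
    · rw [← h, sinc_zero, div_lt_one pi_pos]; linarith [pi_gt_three]
    · rw [sinc_of_ne_zero h.ne']; exact (wk_z y ⟨h, hy.2⟩).1
  have h2pi : 0 < 2 / π := by positivity
  have hmono : StrictMonoOn (wkD k s) (Ico 0 (π / 2)) := by
    apply strictMonoOn_of_deriv_pos (convex_Ico _ _)
    · unfold wkD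
      apply ContinuousOn.add
      · apply ContinuousOn.neg
        apply ContinuousOn.log
        · apply ContinuousOn.sub continuousOn_const
          apply ContinuousOn.mul continuousOn_const
          apply ContinuousOn.rpow_const continuous_sinc.continuousOn
          intro y hy
          left
          linarith [hsinc y hy]
        · intro y hy
          have := wk_tz k hk _ (hsinc y hy)
          rw [hs]
          linarith
      · apply ContinuousOn.mul continuousOn_const
        apply ContinuousOn.sub
        · apply ContinuousOn.log continuous_cos.continuousOn
          intro y hy
          exact (cos_pos_of_mem_Ioo ⟨by linarith [hy.1, pi_pos], hy.2⟩).ne'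
        · apply ContinuousOn.log continuous_sinc.continuousOn
          intro y hy
          linarith [hsinc y hy]
    · intro y hy
      rw [interior_Ico] at hy
      obtain ⟨d, hd, hd0⟩ := wk_D_deriv k s y hk hy
        (by rw [hs]; exact wk_tz k hk _ (wk_z y hy).1) hs0
        (by rw [hs]; exact wk_keyk k hk y hy)
      rw [hd.deriv]
      exact hd0
  have hlt := hmono ⟨le_rfl, by positivity⟩ ⟨hx.1.le, hx.2⟩ hx.1
  have hx0 := hx.1
  have hsp : 0 < sin x := sin_pos_of_pos_of_lt_pi hx.1 (by linarith [hx.2, pi_pos])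
  have hcp : 0 < cos x := cos_pos_of_mem_Ioo ⟨by linarith [hx.1, pi_pos], hx.2⟩
  have htz := wk_tz k hk _ (wk_z x hx).1
  rw [← hs] at htz
  have hz0 : 0 < sin x / x := by positivity
  have htan : tan x / x = (sin x / x) / cos x := by rw [tan_eq_sin_div_cos]; field_simp
  rw [htan]
  simp only [wkD, sinc_zero, one_rpow, cos_zero, log_one, sinc_of_ne_zero hx0.ne'] at hlt
  have h1 : log ((1 - 2 / (k + 2) * (sin x / x) ^ (-s)) / (k / (k + 2)))
      < log (((sin x / x) / cos x) ^ (-(s / k))) := by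
    rw [log_rpow (by positivity), log_div (by linarith) (by positivity),
      log_div hz0.ne' hcp.ne']
    rw [show 1 - 2 / (k + 2) * 1 = k / (k + 2) by field_simp; ring] at hlt
    linarith
  have h2 := (log_lt_log_iff (div_pos (by linarith) (by positivity)) (by positivity)).1 h1
  rw [div_lt_iff₀ (by positivity)] at h2
  linarith

/-- Bernoulli type bound. -/
lemma wk_bern (w : ℝ) (hw : 0 < w) (θ e : ℝ) (h0 : 0 ≤ θ) (h1 : θ ≤ 1) :
    w ^ (e * θ) ≤ 1 + θ * (w ^ e - 1) := by
  have hp : 0 < w ^ e := by positivity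
  have h := rpow_one_add_le_one_add_mul_self (s := w ^ e - 1) (p := θ) (by linarith) h0 h1
  rwa [add_sub_cancel, ← rpow_mul hw.le] at h

lemma wk_cube (x : ℝ) (hx : x ∈ Ioo (0 : ℝ) (π / 2)) :
    1 < (sin x / x) ^ 2 * (tan x / x) := by
  have hx0 := hx.1
  have hcp : 0 < cos x := cos_pos_of_mem_Ioo ⟨by linarith [hx.1, pi_pos], hx.2⟩
  have hs := wk_sin3 x hx0.le
  have hc := wk_cos4 x hx0.le
  have hx2 : x < 1.6 := by linarith [hx.2, pi_lt_d4]
  have hxx : x ^ 2 < 2.56 := by nlinarith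
  have hq : 0 < x - x ^ 3 / 6 := by
    have : 0 < x * (1 - x ^ 2 / 6) := mul_pos hx0 (by linarith)
    linarith
  have h1 : (x - x ^ 3 / 6) ^ 3 ≤ sin x ^ 3 := pow_le_pow_left₀ hq.le (by linarith) 3
  have h2 : x ^ 3 * cos x ≤ x ^ 3 * (1 - x ^ 2 / 2 + x ^ 4 / 24) :=
    mul_le_mul_of_nonneg_left (by linarith) (by positivity)
  have h3 : 0 < x ^ 7 / 24 * (1 - x ^ 2 / 9) := mul_pos (by positivity) (by linarith)
  have h4 : x ^ 3 * cos x < sin x ^ 3 := by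
    have : (x - x ^ 3 / 6) ^ 3 = x ^ 3 * (1 - x ^ 2 / 2 + x ^ 4 / 24) + x ^ 7 / 24 * (1 - x ^ 2 / 9) := by
      ring
    linarith
  rw [tan_eq_sin_div_cos]
  rw [show (sin x / x) ^ 2 * (sin x / cos x / x) = sin x ^ 3 / (x ^ 3 * cos x) by field_simp]
  rw [one_lt_div (by positivity)]
  exact h4

lemma wk_pos (k : ℝ) (hk : 1 ≤ k) (p : ℝ) (hp : 0 < p) (x : ℝ) (hx : x ∈ Ioo (0 : ℝ) (π / 2)) :
    1 < 2 / (k + 2) * (sin x / x) ^ (k * p) + k / (k + 2) * (tan x / x) ^ p := by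
  have hx0 := hx.1
  have hsp : 0 < sin x := sin_pos_of_pos_of_lt_pi hx.1 (by linarith [hx.2, pi_pos])
  have htp : 0 < tan x := tan_pos_of_pos_of_lt_pi_div_two hx.1 hx.2
  have hA : 0 < sin x / x := by positivity
  have hB : 0 < tan x / x := by positivity
  have hc := wk_cube x hx
  have hk2 : 0 < k + 2 := by linarith
  have hk0 : 0 < k := by linarith
  generalize sin x / x = A at *
  generalize tan x / x = B at *
  have h := geom_mean_le_arith_mean2_weighted (w₁ := 2 / (k + 2)) (w₂ := k / (k + 2))
    (p₁ := A ^ (k * p)) (p₂ := B ^ p) (by positivity) (by positivity) (by positivity)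
    (by positivity) (by field_simp; ring)
  refine lt_of_lt_of_le ?_ h
  have : (A ^ (k * p)) ^ (2 / (k + 2)) * (B ^ p) ^ (k / (k + 2))
      = (A ^ 2 * B) ^ (k * p / (k + 2)) := by
    rw [mul_rpow (by positivity) hB.le, ← rpow_natCast, ← rpow_mul hA.le, ← rpow_mul hA.le,
      ← rpow_mul hB.le]
    congr 2
    · push_cast; ring
    · ring
  rw [this]
  exact one_lt_rpow hc (by positivity)

lemma wk_nec (k : ℝ) (hk : 1 ≤ k) (p : ℝ) (hp : p < 0)
    (h : ∀ x ∈ Ioo (0 : ℝ) (π / 2),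
        2 / (k + 2) * (sin x / x) ^ (k * p) + k / (k + 2) * (tan x / x) ^ p > 1) :
    p ≤ -((log (k + 2) - log 2) / (k * (log π - log 2))) := by
  have hk2 : 0 < k + 2 := by linarith
  have hk0 : 0 < k := by linarith
  have hp2 : 0 < π / 2 := by positivity
  have hL := wk_logpi
  let f : ℝ → ℝ := fun x =>
    2 / (k + 2) * (sin x / x) ^ (k * p) + k / (k + 2) * (x * cos x / sin x) ^ (-p)
  have hf : ContinuousAt f (π / 2) := by
    have h1 : ContinuousAt (fun x : ℝ => sin x / x) (π / 2) :=
      continuous_sin.continuousAt.div continuousAt_id hp2.ne'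
    have h2 : ContinuousAt (fun x : ℝ => x * cos x / sin x) (π / 2) :=
      (continuousAt_id.mul continuous_cos.continuousAt).div continuous_sin.continuousAt (by simp)
    exact (continuousAt_const.mul (h1.rpow_const (Or.inl (by simp)))).add
      (continuousAt_const.mul (h2.rpow_const (Or.inr (by linarith))))
  have hlim : Filter.Tendsto f (nhdsWithin (π / 2) (Iio (π / 2))) (nhds (f (π / 2))) :=
    hf.tendsto.mono_left nhdsWithin_le_nhds
  have hge : 1 ≤ f (π / 2) := by
    apply ge_of_tendsto hlim
    filter_upwards [Ioo_mem_nhdsLT hp2] with x hx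
    have := h x hx
    have hsp : 0 < sin x := sin_pos_of_pos_of_lt_pi hx.1 (by linarith [hx.2, pi_pos])
    have hcp : 0 < cos x := cos_pos_of_mem_Ioo ⟨by linarith [hx.1, pi_pos], hx.2⟩
    have hx0 := hx.1
    have e : (x * cos x / sin x) ^ (-p) = (tan x / x) ^ p := by
      rw [rpow_neg (by positivity), ← inv_rpow (by positivity), tan_eq_sin_div_cos]
      congr 1
      field_simp
    simp only [f, e]
    exact this.le
  simp only [f, sin_pi_div_two, cos_pi_div_two, mul_zero, zero_div] at hge
  rw [zero_rpow (by linarith), mul_zero, add_zero] at hge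
  have h3 := log_nonneg hge
  rw [log_mul (by positivity) (by positivity), log_rpow (by positivity), log_div two_ne_zero hk2.ne',
    one_div, log_inv, log_div pi_ne_zero two_ne_zero] at h3
  rw [log_div pi_ne_zero two_ne_zero] at hL
  rw [← neg_div, le_div_iff₀ (by positivity)]
  linarith

lemma wk_neg (k : ℝ) (hk : 1 ≤ k) (p : ℝ)
    (hp : p ≤ -((log (k + 2) - log 2) / (k * (log π - log 2))))
    (x : ℝ) (hx : x ∈ Ioo (0 : ℝ) (π / 2)) :
    1 < 2 / (k + 2) * (sin x / x) ^ (k * p) + k / (k + 2) * (tan x / x) ^ p := by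
  have hk2 : 0 < k + 2 := by linarith
  have hk0 : 0 < k := by linarith
  have hL := wk_logpi
  obtain ⟨s, hs⟩ : ∃ s, s = log ((k + 2) / 2) / log (π / 2) := ⟨_, rfl⟩
  have hs0 : 0 < s := by rw [hs]; exact div_pos (log_pos (by linarith)) hL
  have hq := wk_q0 k hk x hx s hs
  have hp' : p ≤ -(s / k) := by
    rw [hs, log_div hk2.ne' two_ne_zero, log_div pi_ne_zero two_ne_zero, div_div,
      mul_comm (log π - log 2) k]
    exact hp
  have hsk : 0 < s / k := by positivity
  have hpn : p < 0 := by linarith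
  have hx0 := hx.1
  have hsp : 0 < sin x := sin_pos_of_pos_of_lt_pi hx.1 (by linarith [hx.2, pi_pos])
  have htp : 0 < tan x := tan_pos_of_pos_of_lt_pi_div_two hx.1 hx.2
  have hA : 0 < sin x / x := by positivity
  have hB : 0 < tan x / x := by positivity
  generalize sin x / x = A at *
  generalize tan x / x = B at *
  obtain ⟨θ, hθ⟩ : ∃ θ, θ = -(s / k) / p := ⟨_, rfl⟩
  have hθ0 : 0 < θ := by rw [hθ]; exact div_pos_of_neg_of_neg (by linarith) hpn
  have hθ1 : θ ≤ 1 := by rw [hθ, div_le_one_of_neg hpn]; exact hp'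
  have hpθ : p * θ = -(s / k) := by rw [hθ]; exact mul_div_cancel₀ _ hpn.ne
  have hkpθ : k * p * θ = -s := by rw [mul_assoc, hpθ]; field_simp
  have b1 := wk_bern A hA θ (k * p) hθ0.le hθ1
  have b2 := wk_bern B hB θ p hθ0.le hθ1
  rw [hkpθ] at b1
  rw [hpθ] at b2
  have c1 := mul_le_mul_of_nonneg_left b1 (show 0 ≤ 2 / (k + 2) by positivity)
  have c2 := mul_le_mul_of_nonneg_left b2 (show 0 ≤ k / (k + 2) by positivity)
  have hsum : 2 / (k + 2) + k / (k + 2) = 1 := by field_simp; ring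
  have h5 : 0 < θ * (2 / (k + 2) * A ^ (k * p) + k / (k + 2) * B ^ p - 1) := by
    have e : θ * (2 / (k + 2) * A ^ (k * p) + k / (k + 2) * B ^ p - 1)
      = 2 / (k + 2) * (1 + θ * (A ^ (k * p) - 1)) + k / (k + 2) * (1 + θ * (B ^ p - 1)) - 1
        - (1 - θ) * (2 / (k + 2) + k / (k + 2) - 1) := by ring
    rw [e, hsum]
    linarith
  have := pos_of_mul_pos_right h5 hθ0.le
  linarith

theorem wilker_trig_gt (k : ℝ) (hk : 1 ≤ k) (p : ℝ) (hp : p ≠ 0) :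
    (∀ x ∈ Ioo (0 : ℝ) (π / 2),
        2 / (k + 2) * (sin x / x) ^ (k * p) + k / (k + 2) * (tan x / x) ^ p > 1) ↔
      (0 < p ∨ p ≤ -((Real.log (k + 2) - Real.log 2) / (k * (Real.log π - Real.log 2)))) := by
  constructor
  · intro h
    rcases lt_or_gt_of_ne hp with hn | hpos
    · exact Or.inr (wk_nec k hk p hn h)
    · exact Or.inl hpos
  · rintro (h | h) x hx
    · exact wk_pos k hk p h x hx
    · exact wk_neg k hk p h x hx
end

section
/- Fix a real number k ≥ 1. The inequality (2/(k+2))·(sinh(x)/x)^(k·p) + (k/(k+2))·(tanh(x)/x)^p > 1 holds for every x ∈ (0, ∞) if and only if p > 0 or p ≤ −12/(5(k+2)). -/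
open Real Set


/-- the polynomial inequality behind the case `k = 1` -/
lemma wk_poly (s : ℝ) (hs : 1 < s) : 243 * (2 * s ^ 3 + 1) ^ 4 < s ^ 2 * (2 + s ^ 2) ^ 9 := by
  obtain ⟨y, rfl⟩ : ∃ y, s = 1 + y := ⟨s - 1, by ring⟩
  have hy : 0 < y := by linarith
  rw [← sub_pos]
  ring_nf
  positivity

/-- derivative bound for the case `k = 1` -/
lemma wk_der_pos (C : ℝ) (hC : 1 < C) :
    (3:ℝ) ^ (5/4:ℝ) * (C * (2 + C ^ (4/5:ℝ)) ^ (-5/4:ℝ)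
      - (C ^ 2 - 1) * (C ^ (4/5 - 1:ℝ) * (2 + C ^ (4/5:ℝ)) ^ (-5/4 - 1:ℝ))) < 1 := by
  have hC0 : 0 < C := by linarith
  set t := C ^ (1/5:ℝ) with ht
  have ht0 : 0 < t := by positivity
  have ht1 : 1 < t := Real.one_lt_rpow hC (by norm_num)
  have h5 : C = t ^ 5 := by
    rw [ht, ← Real.rpow_natCast, ← Real.rpow_mul hC0.le]; norm_num
  have h4 : C ^ (4/5:ℝ) = t ^ 4 := by
    rw [ht, ← Real.rpow_natCast, ← Real.rpow_mul hC0.le]; norm_num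
  have h1 : C ^ (4/5 - 1:ℝ) = t⁻¹ := by
    rw [ht, ← Real.rpow_neg hC0.le]; norm_num
  rw [h4, h1]
  set Q := 2 + t ^ 4 with hQ
  have hQ0 : 0 < Q := by positivity
  have e1 : Q ^ (-5/4:ℝ) = Q * Q ^ (-5/4 - 1:ℝ) := by
    rw [Real.rpow_sub_one hQ0.ne']; field_simp
  rw [e1]
  have e2 : Q ^ (-5/4 - 1:ℝ) = (Q ^ (9/4:ℝ))⁻¹ := by
    rw [← Real.rpow_neg hQ0.le]; norm_num
  rw [e2, h5]
  set U := Q ^ (9/4:ℝ) with hU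
  have hU0 : 0 < U := by positivity
  have hU4 : U ^ 4 = Q ^ 9 := by
    rw [hU, ← Real.rpow_natCast, ← Real.rpow_mul hQ0.le, ← Real.rpow_natCast]; norm_num
  set V := (3:ℝ) ^ (5/4:ℝ) with hV
  have hV0 : 0 < V := by positivity
  have hV4 : V ^ 4 = 243 := by
    rw [hV, ← Real.rpow_natCast, ← Real.rpow_mul (by norm_num)]
    norm_num
  have key : V * (2 * t ^ 6 + 1) < t * U := by
    apply lt_of_pow_lt_pow_left₀ 4 (by positivity)
    rw [mul_pow, mul_pow, hV4, hU4, hQ]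
    have := wk_poly (t ^ 2) (by nlinarith)
    calc _ = 243 * (2 * (t ^ 2) ^ 3 + 1) ^ 4 := by ring
      _ < _ := this
      _ = _ := by ring
  have : V * (t ^ 5 * (Q * U⁻¹) - ((t ^ 5) ^ 2 - 1) * (t⁻¹ * U⁻¹)) = V * (2 * t ^ 6 + 1) / (t * U) := by
    rw [hQ]; field_simp; ring
  rw [this, div_lt_one (by positivity)]
  exact key

lemma wk_one_aux (x : ℝ) (hx : 0 < x) :
    (3:ℝ) ^ (5/4:ℝ) * (sinh x * (2 + cosh x ^ (4/5:ℝ)) ^ (-5/4:ℝ)) < x := by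
  set D : ℝ → ℝ := fun x => x - (3:ℝ) ^ (5/4:ℝ) * (sinh x * (2 + cosh x ^ (4/5:ℝ)) ^ (-5/4:ℝ))
    with hD
  have hd : ∀ y, HasDerivAt D (1 - (3:ℝ) ^ (5/4:ℝ) * (cosh y * (2 + cosh y ^ (4/5:ℝ)) ^ (-5/4:ℝ)
      - (cosh y ^ 2 - 1) * (cosh y ^ (4/5 - 1:ℝ) * (2 + cosh y ^ (4/5:ℝ)) ^ (-5/4 - 1:ℝ)))) y := by
    intro y
    have hc := Real.cosh_pos y
    have a1 := (((Real.hasDerivAt_cosh y).rpow_const (p := 4/5) (Or.inl hc.ne')).const_add 2)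
    have a2 := a1.rpow_const (p := -5/4) (Or.inl (by positivity))
    have a3 := (hasDerivAt_id y).sub (((Real.hasDerivAt_sinh y).mul a2).const_mul ((3:ℝ) ^ (5/4:ℝ)))
    refine a3.congr_deriv ?_
    rw [Real.cosh_sq y]
    ring
  have hmono : StrictMonoOn D (Ici 0) := by
    apply strictMonoOn_of_deriv_pos (convex_Ici 0)
    · exact fun y _ => (hd y).continuousAt.continuousWithinAt
    · intro y hy
      rw [interior_Ici] at hy
      rw [(hd y).deriv]
      have := wk_der_pos (cosh y) (Real.one_lt_cosh.2 (ne_of_gt hy))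
      linarith
  have := hmono (by simp) hx.le hx
  simp only [hD, Real.sinh_zero] at this
  linarith

/-- case `k = 1` -/
lemma wk_one (x : ℝ) (hx : 0 < x) :
    3 < 2 * (sinh x / x) ^ (-4/5:ℝ) + (tanh x / x) ^ (-4/5:ℝ) := by
  have h := wk_one_aux x hx
  have hs := Real.sinh_pos_iff.2 hx
  have hc := Real.cosh_pos x
  set q := 2 + cosh x ^ (4/5:ℝ) with hq
  have hq0 : 0 < q := by positivity
  have h2 := Real.rpow_lt_rpow (by positivity) h (show (0:ℝ) < 4/5 by norm_num)
  rw [Real.mul_rpow (by positivity) (by positivity), Real.mul_rpow (by positivity) (by positivity),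
    ← Real.rpow_mul (by norm_num), ← Real.rpow_mul hq0.le] at h2
  norm_num at h2
  rw [Real.rpow_neg_one] at h2
  rw [Real.tanh_eq_sinh_div_cosh, neg_div, Real.rpow_neg (by positivity),
    Real.rpow_neg (by positivity), Real.div_rpow (by positivity) (by positivity),
    Real.div_rpow (by positivity) (by positivity), Real.div_rpow (by positivity) (by positivity)]
  have hs' : 0 < sinh x ^ (4/5:ℝ) := by positivity
  have hx' : 0 < x ^ (4/5:ℝ) := by positivity
  have hc' : 0 < cosh x ^ (4/5:ℝ) := by positivity
  have : 2 * (sinh x ^ (4/5:ℝ) / x ^ (4/5:ℝ))⁻¹ + (sinh x ^ (4/5:ℝ) / cosh x ^ (4/5:ℝ) / x ^ (4/5:ℝ))⁻¹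
      = x ^ (4/5:ℝ) * q / sinh x ^ (4/5:ℝ) := by
    rw [hq]; field_simp
  rw [this, lt_div_iff₀ hs']
  have h3 := mul_lt_mul_of_pos_right h2 hq0
  calc _ = 3 * (sinh x ^ (4/5:ℝ) * q⁻¹) * q := by field_simp
    _ < _ := h3

/-- `u/(1-e^{-u}) - u/2` is monotone -/
lemma wk_g_mono (u v : ℝ) (hu : 0 < u) (huv : u ≤ v) :
    u / (1 - exp (-u)) - u / 2 ≤ v / (1 - exp (-v)) - v / 2 := by
  set g : ℝ → ℝ := fun u => u / (1 - exp (-u)) - u / 2 with hg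
  have hpos : ∀ y : ℝ, 0 < y → 0 < 1 - exp (-y) := fun y hy => by
    have := Real.exp_lt_exp.2 (show -y < 0 by linarith)
    rw [Real.exp_zero] at this
    linarith
  have hd : ∀ y : ℝ, 0 < y → HasDerivAt g
      ((1 * (1 - exp (-y)) - y * (- (exp (-y) * (-1)))) / (1 - exp (-y)) ^ 2 - 1 / 2) y := by
    intro y hy
    have a1 := ((hasDerivAt_id y).neg.exp).const_sub 1
    have a2 := ((hasDerivAt_id y).div a1 (hpos y hy).ne').sub ((hasDerivAt_id y).div_const 2)
    exact a2
  have hm : MonotoneOn g (Ioi 0) := by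
    apply monotoneOn_of_deriv_nonneg (convex_Ioi 0)
    · exact fun y hy => (hd y hy).continuousAt.continuousWithinAt
    · rw [interior_Ioi]
      exact fun y hy => (hd y hy).differentiableAt.differentiableWithinAt
    · rw [interior_Ioi]
      intro y hy
      rw [(hd y hy).deriv, sub_nonneg, le_div_iff₀ (by have := hpos y hy; positivity)]
      have h1 := Real.self_le_sinh_iff.2 (le_of_lt hy)
      rw [Real.sinh_eq] at h1
      have h2 : exp y * exp (-y) = 1 := by rw [← Real.exp_add]; simp
      have h3 := Real.exp_pos (-y)
      have h4 := mul_le_mul_of_nonneg_right h1 h3.le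
      nlinarith
  exact hm hu (lt_of_lt_of_le hu huv) huv

lemma wk_artanh (y l : ℝ) (hy : 0 ≤ y) (hy1 : y < 1) (hl : 0 ≤ l) (hl1 : l ≤ 1) :
    log (1 + l * y) - log (1 - l * y) ≤ l * (log (1 + y) - log (1 - y)) := by
  have hly : l * y ≤ y := by nlinarith
  have h1 := Real.hasSum_log_sub_log_of_abs_lt_one (x := y) (by rw [abs_of_nonneg hy]; exact hy1)
  have h2 := Real.hasSum_log_sub_log_of_abs_lt_one (x := l * y)
    (by rw [abs_of_nonneg (by positivity)]; linarith)
  refine hasSum_le (fun n => ?_) h2 (h1.mul_left l)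
  have : l ^ (2 * n + 1) ≤ l := by
    calc l ^ (2 * n + 1) ≤ l ^ 1 := pow_le_pow_of_le_one hl hl1 (by omega)
      _ = l := pow_one l
  rw [mul_pow]
  have h3 : 0 ≤ (2:ℝ) * (1 / (2 * n + 1)) * y ^ (2 * n + 1) := by positivity
  nlinarith

/-- monotonicity in the weight -/
lemma wk_weight (A B w v : ℝ) (hA : 0 < A) (hw : 0 < w) (hwv : w ≤ v) (hv : v < 1)
    (h : 1 < v * exp (-((1 - v) * A)) + (1 - v) * exp (v * B)) :
    1 < w * exp (-((1 - w) * A)) + (1 - w) * exp (w * B) := by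
  have hg := wk_g_mono ((1 - v) * A) ((1 - w) * A) (mul_pos (by linarith) hA)
    (mul_le_mul_of_nonneg_right (by linarith) hA.le)
  have hpos : ∀ y : ℝ, 0 < y → 0 < 1 - exp (-y) := fun y hy => by
    have := Real.exp_lt_exp.2 (show -y < 0 by linarith)
    rw [Real.exp_zero] at this
    linarith
  have hv' := hpos ((1 - v) * A) (mul_pos (by linarith) hA)
  have hw' := hpos ((1 - w) * A) (mul_pos (by linarith) hA)
  set E := exp (-((1 - v) * A))
  set F := exp (-((1 - w) * A))
  have hv1 : 0 < 1 - v := by linarith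
  have hw1 : 0 < 1 - w := by linarith
  have hv0 : 0 < v := by linarith
  set d2 := (1 - v) / (1 - E) with hd2
  set d1 := (1 - w) / (1 - F) with hd1
  have hd2p : 0 < d2 := by positivity
  have hd1p : 0 < d1 := by positivity
  have hdd : d2 + (v - w) / 2 ≤ d1 := by
    have e1 : (1 - v) * A / (1 - E) = A * d2 := by rw [hd2]; ring
    have e2 : (1 - w) * A / (1 - F) = A * d1 := by rw [hd1]; ring
    rw [e1, e2] at hg
    have : A * (d2 + (v - w) / 2) ≤ A * d1 := by linarith
    exact le_of_mul_le_mul_left this hA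
  have hE : 1 - E = (1 - v) / d2 := by rw [hd2]; field_simp
  have hF : 1 - F = (1 - w) / d1 := by rw [hd1]; field_simp
  have hE2 : E = 1 - (1 - v) / d2 := by linarith
  have hF2 : F = 1 - (1 - w) / d1 := by linarith
  rw [hE2] at h
  rw [hF2]
  have h2 : 1 + v / d2 < exp (v * B) := by
    have : (1 - v) * (1 + v / d2) < (1 - v) * exp (v * B) := by
      have : v * (1 - (1 - v) / d2) = v - (1 - v) * (v / d2) := by ring
      linarith
    exact lt_of_mul_lt_mul_left this hv1.le
  have h3 : 1 + w / d1 < exp (w * B) → 1 < w * (1 - (1 - w) / d1) + (1 - w) * exp (w * B) := by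
    intro h4
    have h5 := mul_lt_mul_of_pos_left h4 hw1
    have : w * (1 - (1 - w) / d1) = w - (1 - w) * (w / d1) := by ring
    linarith
  apply h3
  set c := d2 + v / 2 with hc
  have hcp : 0 < c := by positivity
  have hart := wk_artanh (v / (2 * c)) (w / v) (by positivity)
    (by rw [div_lt_one (by positivity), hc]; linarith) (by positivity)
    (by rw [div_le_one hv0]; exact hwv)
  have e3 : w / v * (v / (2 * c)) = w / (2 * c) := by field_simp
  have hwc : 0 < 2 * c - w := by rw [hc]; linarith
  have e4 : 1 - w / (2 * c) = (2 * c - w) / (2 * c) := by field_simp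
  have e5 : 1 + w / (2 * c) = (2 * c + w) / (2 * c) := by field_simp
  have e6 : 1 - v / (2 * c) = (2 * d2) / (2 * c) := by rw [hc]; field_simp; ring
  have e7 : 1 + v / (2 * c) = (2 * d2 + 2 * v) / (2 * c) := by rw [hc]; field_simp; ring
  rw [e3, e4, e5, e6, e7, ← Real.log_div (by positivity) (by positivity),
    ← Real.log_div (by positivity) (by positivity)] at hart
  have e8 : (2 * d2 + 2 * v) / (2 * c) / (2 * d2 / (2 * c)) = 1 + v / d2 := by field_simp
  have e9 : (2 * c + w) / (2 * c) / ((2 * c - w) / (2 * c)) = 1 + 2 * w / (2 * c - w) := by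
    field_simp; ring
  rw [e8, e9] at hart
  have h6 : log (1 + v / d2) < v * B := by
    rw [Real.log_lt_iff_lt_exp (by positivity)]; exact h2
  have h7 : w / d1 ≤ 2 * w / (2 * c - w) := by
    rw [div_le_div_iff₀ hd1p hwc, hc]
    nlinarith
  have h8 : log (1 + 2 * w / (2 * c - w)) < w * B := by
    calc _ ≤ w / v * log (1 + v / d2) := hart
      _ < w / v * (v * B) := mul_lt_mul_of_pos_left h6 (by positivity)
      _ = w * B := by field_simp
  rw [Real.log_lt_iff_lt_exp (by positivity)] at h8
  linarith

/-- `cosh x < (sinh x / x)^3` -/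
lemma wk_cube_s5 (x : ℝ) (hx : 0 < x) : cosh x < (sinh x / x) ^ 3 := by
  set D : ℝ → ℝ := fun x => sinh x * cosh x ^ (-1/3:ℝ) - x with hD
  have hd : ∀ y, HasDerivAt D (cosh y * cosh y ^ (-1/3:ℝ) +
      sinh y * (sinh y * (-1/3) * cosh y ^ (-1/3 - 1 : ℝ)) - 1) y := by
    intro y
    have hc := Real.cosh_pos y
    have a1 := (((Real.hasDerivAt_cosh y).rpow_const (p := -1/3) (Or.inl hc.ne')))
    exact ((Real.hasDerivAt_sinh y).mul a1).sub (hasDerivAt_id y)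
  have hmono : StrictMonoOn D (Ici 0) := by
    apply strictMonoOn_of_deriv_pos (convex_Ici 0)
    · exact fun y _ => (hd y).continuousAt.continuousWithinAt
    · intro y hy
      rw [interior_Ici] at hy
      rw [(hd y).deriv]
      have hC := (Real.one_lt_cosh.2 (ne_of_gt hy))
      have hsq := Real.cosh_sq y
      generalize sinh y = s at *
      generalize cosh y = C at *
      have hC0 : 0 < C := by linarith
      set t := C ^ (1/3:ℝ) with ht
      have ht0 : 0 < t := by positivity
      have ht1 : 1 < t := Real.one_lt_rpow hC (by norm_num)
      have h3 : C = t ^ 3 := by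
        rw [ht, ← Real.rpow_natCast, ← Real.rpow_mul hC0.le]; norm_num
      have h4 : C ^ (-1/3:ℝ) = t⁻¹ := by
        rw [ht, ← Real.rpow_neg hC0.le]; norm_num
      rw [Real.rpow_sub_one hC0.ne', h4]
      have hs2 : s ^ 2 = t ^ 6 - 1 := by rw [h3] at hsq; linarith
      have : C * t⁻¹ + s * (s * (-1/3) * (t⁻¹ / C)) - 1
          = (2 * t ^ 6 + 1 - 3 * t ^ 4) / (3 * t ^ 4) := by
        have : C * t⁻¹ + s * (s * (-1/3) * (t⁻¹ / C)) - 1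
          = C * t⁻¹ + s ^ 2 * (-1/3) * (t⁻¹ / C) - 1 := by ring
        rw [this, hs2, h3]; field_simp; ring
      rw [this]
      apply div_pos _ (by positivity)
      obtain ⟨z, hz⟩ : ∃ z, t ^ 2 = 1 + z := ⟨t ^ 2 - 1, by ring⟩
      have hz0 : 0 < z := by nlinarith
      have : 2 * t ^ 6 + 1 - 3 * t ^ 4 = 3 * z ^ 2 + 2 * z ^ 3 := by
        have e : 2 * t ^ 6 + 1 - 3 * t ^ 4 = 2 * (t ^ 2) ^ 3 + 1 - 3 * (t ^ 2) ^ 2 := by ring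
        rw [e, hz]; ring
      rw [this]; positivity
  have := hmono (by simp) hx.le hx
  simp only [hD, Real.sinh_zero] at this
  have hc := Real.cosh_pos x
  have hs := Real.sinh_pos_iff.2 hx
  have h1 : x < sinh x * cosh x ^ (-1/3:ℝ) := by linarith
  have h2 := pow_lt_pow_left₀ h1 hx.le (show 3 ≠ 0 by norm_num)
  rw [mul_pow, ← Real.rpow_natCast (cosh x ^ (-1/3:ℝ)), ← Real.rpow_mul hc.le] at h2
  norm_num at h2
  rw [Real.rpow_neg_one] at h2
  rw [div_pow, lt_div_iff₀ (by positivity)]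
  calc _ < cosh x * (sinh x ^ 3 * (cosh x)⁻¹) := mul_lt_mul_of_pos_left h2 hc
    _ = _ := by field_simp

lemma wk_taylor (x : ℝ) (hx : 0 < x) (hx1 : x ≤ 1) :
    cosh x ≤ 1 + x ^ 2 / 2 + x ^ 4 / 24 + x ^ 6 / 100 ∧
    1 + x ^ 2 / 6 + x ^ 4 / 120 ≤ sinh x / x ∧
    sinh x / x ≤ 1 + x ^ 2 / 6 + x ^ 4 / 120 + x ^ 6 / 100 := by
  have habs : |x| = x := abs_of_pos hx
  have c1 := (abs_le.1 (Real.exp_bound (x := x) (by rw [habs]; exact hx1) (n := 6) (by norm_num))).2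
  have c2 := (abs_le.1 (Real.exp_bound (x := -x) (by rw [abs_neg, habs]; exact hx1) (n := 6) (by norm_num))).2
  have s1 := (abs_le.1 (Real.exp_bound (x := x) (by rw [habs]; exact hx1) (n := 7) (by norm_num))).2
  have s2 := (abs_le.1 (Real.exp_bound (x := -x) (by rw [abs_neg, habs]; exact hx1) (n := 7) (by norm_num))).1
  rw [habs] at c1 s1
  rw [abs_neg, habs] at c2 s2
  simp [Finset.sum_range_succ, Nat.factorial] at c1 c2 s1 s2
  have h6 : 0 < x ^ 6 := by positivity
  have h7 : 0 < x ^ 7 := by positivity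
  refine ⟨?_, ?_, ?_⟩
  · rw [Real.cosh_eq]; nlinarith
  · rw [le_div_iff₀ hx]
    have := sum_le_hasSum (Finset.range 3) (fun n _ => by positivity) (Real.hasSum_sinh x)
    simp [Finset.sum_range_succ, Nat.factorial] at this
    nlinarith
  · rw [div_le_iff₀ hx, Real.sinh_eq]; nlinarith

lemma wk_tanh (x : ℝ) (hx : 0 < x) (hx1 : x ≤ 1) : sinh x ≤ x * cosh x := by
  have h1 := (wk_taylor x hx hx1).2.2
  have h2 := sum_le_hasSum (Finset.range 2) (fun n _ => by
    have : 0 ≤ x ^ (2 * n) := by positivity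
    positivity) (Real.hasSum_cosh x)
  simp [Finset.sum_range_succ, Nat.factorial] at h2
  rw [div_le_iff₀ hx] at h1
  have h3 : x ^ 4 ≤ x ^ 2 := pow_le_pow_of_le_one hx.le hx1 (by norm_num)
  have h4 : x ^ 6 ≤ x ^ 2 := pow_le_pow_of_le_one hx.le hx1 (by norm_num)
  rw [mul_comm x]
  refine h1.trans (mul_le_mul_of_nonneg_right ?_ hx.le)
  nlinarith

lemma wk_pos_s5 {a b : ℝ} (h : 0 < a * b) (ha : 0 < a) : 0 < b :=
  (mul_pos_iff_of_pos_left ha).1 h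

lemma wk_small (x δ : ℝ) (hx : 0 < x) (hδ1 : δ ≤ 1 / 30) (hxδ : x ^ 2 ≤ δ / 10) :
    log (sinh x / x) ≤ x ^ 2 / 6 ∧ -log (tanh x / x) ≤ x ^ 2 / 3 ∧
    (1 / 15 - δ) * x ^ 4 ≤ 2 * log (sinh x / x) + log (tanh x / x) := by
  have hx1 : x ≤ 1 := by nlinarith
  obtain ⟨hC, hS1, hS2⟩ := wk_taylor x hx hx1
  have hs := Real.sinh_pos_iff.2 hx
  have hc := Real.cosh_pos x
  have hT : tanh x / x = (sinh x / x) / cosh x := by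
    rw [Real.tanh_eq_sinh_div_cosh]; field_simp
  have hSp : 0 < sinh x / x := by positivity
  rw [hT, Real.log_div hSp.ne' hc.ne']
  generalize sinh x / x = S at *
  generalize cosh x = C at *
  obtain ⟨z, hz⟩ : ∃ z, z = x ^ 2 := ⟨_, rfl⟩
  have hz0 : 0 < z := by rw [hz]; positivity
  have h4 : x ^ 4 = z ^ 2 := by rw [hz]; ring
  have h6 : x ^ 6 = z ^ 3 := by rw [hz]; ring
  rw [h4, h6, ← hz] at hC hS2
  rw [h4, ← hz] at hS1
  rw [← hz] at hxδ
  rw [h4, ← hz]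
  clear hz h4 h6 hT hs hx1 hx
  have hz1 : z ≤ 1 / 300 := by linarith
  have hδ0 : 0 < δ := by linarith
  have hz2 : 0 < z ^ 2 := by positivity
  have hz3 : z ^ 3 ≤ z ^ 2 / 300 := by nlinarith
  have hz30 : 0 < z ^ 3 := by positivity
  refine ⟨?_, ?_, ?_⟩
  · rw [Real.log_le_iff_le_exp hSp]
    have := Real.quadratic_le_exp_of_nonneg (x := z / 6) (by positivity)
    nlinarith
  · have h1 : C / S ≤ 1 + z / 3 := by
      rw [div_le_iff₀ hSp]
      have := mul_le_mul_of_nonneg_left hS1 (show 0 ≤ 1 + z / 3 by positivity)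
      nlinarith
    have h2 := Real.log_le_sub_one_of_pos (show 0 < C / S by positivity)
    rw [Real.log_div hc.ne' hSp.ne'] at h2
    linarith
  · set y := (1 / 15 - δ) * z ^ 2 with hy
    have hy0 : 0 ≤ y := mul_nonneg (by linarith) hz2.le
    have hyz : y ≤ z ^ 2 / 15 := by nlinarith
    have hy1 : y ≤ 1 := by nlinarith
    have he : exp y ≤ 1 + y + y ^ 2 := by
      have := (abs_le.1 (Real.abs_exp_sub_one_sub_id_le (x := y) (by rw [abs_of_nonneg hy0]; exact hy1))).2
      linarith
    have hy2 : y ^ 2 ≤ z ^ 3 / 100 := by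
      have : y ^ 2 ≤ (z ^ 2 / 15) ^ 2 := pow_le_pow_left₀ hy0 hyz 2
      nlinarith
    have hdz : 10 * z ^ 3 ≤ δ * z ^ 2 := by nlinarith
    have key : C * exp y ≤ S ^ 3 := by
      have hS3 : (1 + z / 6 + z ^ 2 / 120) ^ 3 ≤ S ^ 3 := pow_le_pow_left₀ (by positivity) hS1 3
      have hS4 : 1 + z / 2 + 13 / 120 * z ^ 2 ≤ (1 + z / 6 + z ^ 2 / 120) ^ 3 := by
        have : (1 + z / 6 + z ^ 2 / 120) ^ 3 - (1 + z / 2 + 13 / 120 * z ^ 2) =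
          z^3/216 + z^3/120 + z^4/4800 + z^4/1440 + z^5/28800+z^6/1728000 := by ring
        have : 0 < z^3/216 + z^3/120 + z^4/4800 + z^4/1440 + z^5/28800+z^6/1728000 := by positivity
        linarith
      have hE : exp y ≤ 1 + z ^ 2 / 15 - δ * z ^ 2 + z ^ 3 / 100 := by
        rw [hy] at he; rw [hy] at hy2; rw [hy]; linarith
      have hE' : exp y ≤ 1 + z ^ 2 / 15 - 9 * z ^ 3 := by linarith
      have hC' : C ≤ 1 + z / 2 + z ^ 2 / 24 + z ^ 3 / 100 := hC
      have hmul := mul_le_mul hC' hE' (Real.exp_pos y).le (by positivity)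
      have : (1 + z / 2 + z ^ 2 / 24 + z ^ 3 / 100) * (1 + z ^ 2 / 15 - 9 * z ^ 3) ≤
          1 + z / 2 + 13 / 120 * z ^ 2 := by
        have e : (1 + z / 2 + 13 / 120 * z ^ 2) - (1 + z / 2 + z ^ 2 / 24 + z ^ 3 / 100) * (1 + z ^ 2 / 15 - 9 * z ^ 3) = z ^ 3 * (9 - 1/100 - 1/30 + z * (9/2 - 1/360) + z^2 * (9/24 - 1/1500) + 9/100 * z^3) := by ring
        have : 0 ≤ z ^ 3 * (9 - 1/100 - 1/30 + z * (9/2 - 1/360) + z^2 * (9/24 - 1/1500) + 9/100 * z^3) := by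
          norm_num
          positivity
        linarith
      linarith
    have h1 := Real.log_le_log (by positivity) key
    rw [Real.log_mul hc.ne' (Real.exp_pos y).ne', Real.log_exp, Real.log_pow] at h1
    push_cast at h1
    linarith

set_option maxHeartbeats 2000000 in
theorem wilker_hyp_gt (k : ℝ) (hk : 1 ≤ k) (p : ℝ) (hp : p ≠ 0) :
    (∀ x ∈ Ioi (0 : ℝ),
        2 / (k + 2) * (sinh x / x) ^ (k * p) + k / (k + 2) * (tanh x / x) ^ p > 1) ↔
      (0 < p ∨ p ≤ -(12 / (5 * (k + 2)))) := by
  have hk2 : 0 < k + 2 := by linarith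
  have hk0 : 0 < k := by linarith
  have hSp : ∀ x : ℝ, 0 < x → 0 < sinh x / x := fun x hx =>
    div_pos (Real.sinh_pos_iff.2 hx) hx
  have hTp : ∀ x : ℝ, 0 < x → 0 < tanh x / x := fun x hx => by
    rw [Real.tanh_eq_sinh_div_cosh]
    exact div_pos (div_pos (Real.sinh_pos_iff.2 hx) (Real.cosh_pos x)) hx
  constructor
  · intro h
    by_contra hcon
    push Not at hcon
    obtain ⟨hp1, hp2⟩ := hcon
    obtain ⟨q, rfl⟩ : ∃ q, p = -q := ⟨-p, by ring⟩
    have hq0 : 0 < q := lt_of_le_of_ne (by linarith) (fun h => hp (by rw [← h]; simp))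
    have hq1 : q < 12 / (5 * (k + 2)) := by linarith
    rw [lt_div_iff₀ (by positivity)] at hq1
    obtain ⟨δ, hδ⟩ : ∃ δ, δ = (1 / 15 - q * (k + 2) / 36) / 2 := ⟨_, rfl⟩
    have hδ0 : 0 < δ := by rw [hδ]; nlinarith
    have hδ1 : δ ≤ 1 / 30 := by
      have : 0 < q * (k + 2) := by positivity
      rw [hδ]; linarith
    have hx : 0 < √(δ / 10) := Real.sqrt_pos.2 (by positivity)
    have hx2 : √(δ / 10) ^ 2 = δ / 10 := Real.sq_sqrt (by positivity)
    have hx' := h _ hx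
    have hS0 := Real.log_nonneg (x := sinh √(δ / 10) / √(δ / 10))
      (by rw [le_div_iff₀ hx]; linarith [Real.self_le_sinh_iff.2 hx.le])
    obtain ⟨ha, hb, hab⟩ := wk_small _ δ hx hδ1 hx2.le
    rw [Real.rpow_def_of_pos (hSp _ hx), Real.rpow_def_of_pos (hTp _ hx)] at hx'
    rw [show √(δ / 10) ^ 4 = (√(δ / 10) ^ 2) ^ 2 by ring, hx2] at hab
    rw [hx2] at ha hb
    have hT0 : 0 ≤ -log (tanh √(δ / 10) / √(δ / 10)) := by
      have : log (tanh √(δ / 10) / √(δ / 10)) ≤ 0 := by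
        apply Real.log_nonpos (hTp _ hx).le
        rw [div_le_one hx, Real.tanh_eq_sinh_div_cosh, div_le_iff₀ (Real.cosh_pos _)]
        exact wk_tanh _ hx (by nlinarith)
      linarith
    generalize log (sinh √(δ / 10) / √(δ / 10)) = a at *
    generalize log (tanh √(δ / 10) / √(δ / 10)) = b' at *
    obtain ⟨b, rfl⟩ : ∃ b, b' = -b := ⟨-b', by ring⟩
    rw [neg_neg] at hb hT0
    have hq2 : q ≤ 4 / 5 := by nlinarith
    have e1 : exp (a * (k * -q)) ≤ 1 - k * q * a + (k * q * a) ^ 2 / 2 := by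
      have hy : 0 ≤ k * q * a := by positivity
      generalize hyy : k * q * a = y at *
      rw [show a * (k * -q) = -y by rw [← hyy]; ring]
      rw [Real.exp_neg]
      have := Real.quadratic_le_exp_of_nonneg hy
      apply inv_le_of_inv_le₀ (by nlinarith [sq_nonneg (y-1)])
      refine le_trans ?_ this
      rw [inv_le_iff_one_le_mul₀ (by nlinarith [sq_nonneg (y-1)])]
      nlinarith [sq_nonneg (y ^ 2)]
    have e2 : exp (-b * -q) ≤ 1 + q * b + (q * b) ^ 2 / 2 + (q * b) ^ 3 := by
      have hy : 0 ≤ q * b := by positivity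
      have hy1 : q * b ≤ 1 := by nlinarith
      rw [show -b * -q = q * b by ring]
      have := Real.exp_bound' hy hy1 (n := 3) (by norm_num)
      simp [Finset.sum_range_succ, Nat.factorial] at this
      have : 0 ≤ (q * b) ^ 3 := by positivity
      nlinarith
    have e3 : 2 * exp (a * (k * -q)) + k * exp (-b * -q) > k + 2 := by
      have := mul_lt_mul_of_pos_left hx' hk2
      have e : (k + 2) * (2 / (k + 2) * rexp (a * (k * -q)) + k / (k + 2) * rexp (-b * -q)) = 2 * exp (a * (k * -q)) + k * exp (-b * -q) := by
        field_simp
      linarith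
    have e4 : 0 < k * q * (-(2 * a - b) + q * (k * a ^ 2 + b ^ 2 / 2) + q ^ 2 * b ^ 3) := by
      have := mul_le_mul_of_nonneg_left e2 hk0.le
      nlinarith
    have e5 : 0 < -(2 * a - b) + q * (k * a ^ 2 + b ^ 2 / 2) + q ^ 2 * b ^ 3 :=
      wk_pos_s5 e4 (by positivity)
    obtain ⟨z, hz⟩ : ∃ z, z = δ / 10 := ⟨_, rfl⟩
    rw [← hz] at ha hb hab
    have hz0 : 0 < z := by rw [hz]; positivity
    have f1 : a ^ 2 ≤ (z / 6) ^ 2 := pow_le_pow_left₀ hS0 ha 2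
    have f2 : b ^ 2 ≤ (z / 3) ^ 2 := pow_le_pow_left₀ hT0 hb 2
    have f3 : b ^ 3 ≤ (z / 3) ^ 3 := pow_le_pow_left₀ hT0 hb 3
    have g1 : q * (k * a ^ 2 + b ^ 2 / 2) ≤ q * (k * (z / 6) ^ 2 + (z / 3) ^ 2 / 2) := by gcongr
    have g2 : q ^ 2 * b ^ 3 ≤ 1 * (z / 3) ^ 3 := by
      have : q ^ 2 ≤ 1 := by nlinarith
      gcongr
    have g3 : q * (k * (z / 6) ^ 2 + (z / 3) ^ 2 / 2) = (1 / 15 - 2 * δ) * z ^ 2 := by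
      rw [hδ]; ring
    have g4 : δ * z ^ 2 = 10 * z ^ 3 := by
      rw [show δ = 10 * z by rw [hz]; ring]; ring
    have g5 : 0 < z ^ 3 := by positivity
    nlinarith
  · intro h x hx
    have hx : 0 < x := hx
    have hS := hSp x hx
    have hT := hTp x hx
    rcases h with h | h
    · have hc := wk_cube_s5 x hx
      have hTe : tanh x / x = (sinh x / x) / cosh x := by
        rw [Real.tanh_eq_sinh_div_cosh]; field_simp
      have hab : 0 < 2 * log (sinh x / x) + log (tanh x / x) := by
        have := Real.log_lt_log (Real.cosh_pos x) hc
        rw [Real.log_pow] at this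
        rw [hTe, Real.log_div hS.ne' (Real.cosh_pos x).ne']
        push_cast at this
        linarith
      rw [Real.rpow_def_of_pos hS, Real.rpow_def_of_pos hT]
      generalize log (sinh x / x) = a at *
      generalize log (tanh x / x) = b at *
      have e1 := mul_le_mul_of_nonneg_left (Real.add_one_le_exp (a * (k * p)))
        (show 0 ≤ 2 / (k + 2) by positivity)
      have e2 := mul_le_mul_of_nonneg_left (Real.add_one_le_exp (b * p))
        (show 0 ≤ k / (k + 2) by positivity)
      have e3 : 2 / (k + 2) * (a * (k * p) + 1) + k / (k + 2) * (b * p + 1) =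
        1 + k * p / (k + 2) * (2 * a + b) := by field_simp; ring
      have e4 : 0 < k * p / (k + 2) * (2 * a + b) := by positivity
      linarith
    · set p₀ := -(12 / (5 * (k + 2))) with hp₀
      have hp0 : p₀ < 0 := by rw [hp₀]; apply neg_neg_of_pos; positivity
      have hA : 0 < log (sinh x / x) :=
        Real.log_pos (by rw [lt_div_iff₀ hx]; linarith [Real.self_lt_sinh_iff.2 hx])
      have base : 1 < 2 / (k + 2) * (sinh x / x) ^ (k * p₀) + k / (k + 2) * (tanh x / x) ^ p₀ := by
        have h1 := wk_one x hx
        rw [Real.rpow_def_of_pos hS, Real.rpow_def_of_pos hT] at h1 ⊢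
        generalize log (sinh x / x) = a at *
        generalize log (tanh x / x) = b at *
        have := wk_weight (12 / 5 * a) (-(6 / 5) * b) (2 / (k + 2)) (2 / 3) (by positivity)
          (by positivity) (by gcongr; linarith) (by norm_num) (by
            rw [show -((1 - 2 / 3) * (12 / 5 * a)) = a * (-4 / 5) by ring,
              show (2 / 3 : ℝ) * (-(6 / 5) * b) = b * (-4 / 5) by ring]
            linarith)
        rw [show 1 - 2 / (k + 2) = k / (k + 2) by field_simp; ring] at this
        have i1 : a * (k * p₀) = -(k / (k + 2) * (12 / 5 * a)) := by rw [hp₀]; field_simp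
        have i2 : b * p₀ = 2 / (k + 2) * (-(6 / 5) * b) := by rw [hp₀]; field_simp; ring
        rw [i1, i2]
        exact this
      have hpn : p < 0 := by linarith
      set l := p₀ / p with hl
      have hl0 : 0 < l := div_pos_of_neg_of_neg hp0 hpn
      have hl1 : l ≤ 1 := by rw [hl, div_le_one_of_neg hpn]; exact h
      have hpl : p₀ = p * l := by rw [hl]; field_simp
      rw [hpl, ← mul_assoc, Real.rpow_mul hS.le, Real.rpow_mul hT.le] at base
      have hX : 0 < (sinh x / x) ^ (k * p) := by positivity
      have hY : 0 < (tanh x / x) ^ p := by positivity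
      generalize (sinh x / x) ^ (k * p) = X at *
      generalize (tanh x / x) ^ p = Y at *
      have e1 := rpow_one_add_le_one_add_mul_self (s := X - 1) (by linarith) hl0.le hl1
      have e2 := rpow_one_add_le_one_add_mul_self (s := Y - 1) (by linarith) hl0.le hl1
      rw [add_sub_cancel] at e1 e2
      have f1 := mul_le_mul_of_nonneg_left e1 (show 0 ≤ 2 / (k + 2) by positivity)
      have f2 := mul_le_mul_of_nonneg_left e2 (show 0 ≤ k / (k + 2) by positivity)
      have e3 : 2 / (k + 2) * (1 + l * (X - 1)) + k / (k + 2) * (1 + l * (Y - 1)) =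
        1 + l * (2 / (k + 2) * X + k / (k + 2) * Y - 1) := by field_simp; ring
      have e4 : 0 < l * (2 / (k + 2) * X + k / (k + 2) * Y - 1) := by linarith
      have := wk_pos_s5 e4 hl0
      linarith
end
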